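/- arXiv:1210.4582 — 3 statements merged into one kernel-verified Lean document; each statement's English description precedes it below -/
import Mathlib

section
/- There exists a constant C > 0, depending only on A₂ and K₂ and independent of ε, such that for every positive integer N (h = 1/N), every ε ∈ [−1/2, 1/2], and all integers i, j with 2 ≤ |i − j| ≤ N/2, the midpoint quadrature error satisfies |E^ε_{ij}| ≤ C h² / |i − j|². -/
noncomputable section

/-- Smooth kernel data, 1-periodic in each variable. -/
def SPK (A : ℝ → ℝ → ℂ) : Prop :=
  ContDiff ℝ (⊤ : ℕ∞) (fun p : ℝ × ℝ => A p.1 p.2) ∧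
    (∀ s t, A (s + 1) t = A s t) ∧ (∀ s t, A s (t + 1) = A s t)

/-- Logarithmic kernel `V(s,t) = (i/(2π)) A(s,t) log(sin²(π(s−t))) + K(s,t)`. -/
def logKer (A K : ℝ → ℝ → ℂ) (s t : ℝ) : ℂ :=
  Complex.I / (2 * Real.pi) * A s t * (Real.log (Real.sin (Real.pi * (s - t)) ^ 2) : ℂ) + K s t

/-- Grid point `s_{j+ε} = (j − 1/2 + ε)h`. -/
def sg (h ε : ℝ) (j : ℤ) : ℝ := ((j : ℝ) - 1 / 2 + ε) * h

/-- Grid point `t_{j+ε} = (j + ε)h`. -/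
def tg (h ε : ℝ) (j : ℤ) : ℝ := ((j : ℝ) + ε) * h

/-- Integral operator with kernel `V`. -/
def Vop (V : ℝ → ℝ → ℂ) (φ : ℝ → ℂ) (s : ℝ) : ℂ := ∫ t in (0:ℝ)..1, V s t * φ t

/-- Hypersingular operator `W = −D V₁ D + V₂`. -/
def Wop (V1 V2 : ℝ → ℝ → ℂ) (φ : ℝ → ℂ) (s : ℝ) : ℂ :=
  -deriv (Vop V1 (deriv φ)) s + Vop V2 φ s

/-- Nyström matrix entries `W^ε_{ij}`. -/
def Wmat (V1 V2 : ℝ → ℝ → ℂ) (h ε : ℝ) (i j : ℤ) : ℂ :=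
  V1 (sg h ε (i + 1)) (sg h 0 (j + 1)) - V1 (sg h ε i) (sg h 0 (j + 1))
    - V1 (sg h ε (i + 1)) (sg h 0 j) + V1 (sg h ε i) (sg h 0 j)
    + (h : ℂ) ^ 2 * V2 (tg h ε i) (tg h 0 j)

/-- Fourier coefficient of a 1-periodic function. -/
def fc (u : ℝ → ℂ) (m : ℤ) : ℂ :=
  ∫ t in (0:ℝ)..1, u t * Complex.exp (-(2 * Real.pi * Complex.I * (m : ℂ) * (t : ℂ)))

/-- Periodic Sobolev norm of order `r`. -/
def sobNorm (r : ℝ) (u : ℝ → ℂ) : ℝ :=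
  Real.sqrt (‖fc u 0‖ ^ 2 +
    ∑' m : ℤ, if m = 0 then 0 else |(m : ℝ)| ^ (2 * r) * ‖fc u m‖ ^ 2)

/-- 1-periodic step function on the ε-shifted grid with coefficients `v`. -/
def stepf (N : ℕ) (ε : ℝ) (v : ZMod N → ℂ) (s : ℝ) : ℂ :=
  v ((⌊s * N + 1 / 2 - ε⌋ : ℤ) : ZMod N)

/-- Midpoint quadrature error matrix entries `E^ε_{ij}`. -/
def Emat (V2 : ℝ → ℝ → ℂ) (h ε : ℝ) (i j : ℤ) : ℂ :=
  (∫ s in (sg h ε i)..(sg h ε (i + 1)), ∫ t in (sg h 0 j)..(sg h 0 (j + 1)), V2 s t)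
    - (h : ℂ) ^ 2 * V2 (tg h ε i) (tg h 0 j)

/-- Spectral (ℓ²-operator) norm of a complex `N×N` matrix. -/
def specNorm {N : ℕ} (M : Matrix (Fin N) (Fin N) ℂ) : ℝ :=
  ‖LinearMap.toContinuousLinearMap (Matrix.toEuclideanLin M)‖

/-- The function `C̄₁(t) = −(1/(2πi)) log(4 sin²(πt))`. -/
def Cbar1 (t : ℝ) : ℂ :=
  -(1 / (2 * Real.pi * Complex.I)) * (Real.log (4 * Real.sin (Real.pi * t) ^ 2) : ℂ)

end

/-!
The two-dimensional midpoint rule on a square of side `h` has error at most `h⁴/12` times a bound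
for the pure second derivatives of the integrand: in one variable, pair the points `c ± u` and
bound the second difference `f (c + u) + f (c - u) - 2 f c` by `M u²`. Since the second
derivative of `log sin² (π x)` is `-2π² / sin² (π x)`, the second derivatives of the kernel are
`O(sin⁻² (π (s - t)))` with a constant that only sees bounds for the smooth coefficients. On the
cell `(i, j)` the difference `s - t` stays within `3h/2` of `(i - j) h`, so for `2 ≤ |i - j|` and
`|i - j| h ≤ 1/2` it keeps a distance of at least `|i - j| h / 4` from the integers, and
`|sin (π (s - t))| ≥ |i - j| h / 2`. The error is therefore of order
`h⁴ / (|i - j| h)² = h² / |i - j|²`.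
-/

open Set Function MeasureTheory
open scoped Real

section MidpointRule

variable {E : Type*} [NormedAddCommGroup E] [NormedSpace ℝ E]

lemma hasDerivAt_deriv_of_contDiffAt_two {f : ℝ → E} {x : ℝ} (hf : ContDiffAt ℝ 2 f x) :
    HasDerivAt (deriv f) (iteratedDeriv 2 f x) x := by
  rw [iteratedDeriv_succ, iteratedDeriv_one]
  exact ((hf.derivWithin (m := 1) (by norm_num)).differentiableAt one_ne_zero).hasDerivAt

lemma norm_deriv_add_sub_deriv_sub_le {f : ℝ → E} {c u M : ℝ}
    (hf : ∀ x ∈ Icc (c - u) (c + u), ContDiffAt ℝ 2 f x)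
    (hM : ∀ x ∈ Icc (c - u) (c + u), ‖iteratedDeriv 2 f x‖ ≤ M) (hu : 0 ≤ u) :
    ‖deriv f (c + u) - deriv f (c - u)‖ ≤ 2 * M * u := by
  have hmvt := (convex_Icc (c - u) (c + u)).norm_image_sub_le_of_norm_hasDerivWithin_le
    (fun x hx => (hasDerivAt_deriv_of_contDiffAt_two (hf x hx)).hasDerivWithinAt) hM
    (x := c - u) (y := c + u) ⟨le_rfl, by linarith⟩ ⟨by linarith, le_rfl⟩
  rw [Real.norm_of_nonneg (by linarith)] at hmvt
  linarith

lemma norm_second_difference_le {f : ℝ → E} {c u M : ℝ}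
    (hf : ∀ x ∈ Icc (c - u) (c + u), ContDiffAt ℝ 2 f x)
    (hM : ∀ x ∈ Icc (c - u) (c + u), ‖iteratedDeriv 2 f x‖ ≤ M) (hu : 0 ≤ u) :
    ‖f (c + u) + f (c - u) - (2 : ℝ) • f c‖ ≤ M * u ^ 2 := by
  have hderiv : ∀ v ∈ Icc 0 u, HasDerivAt (fun v => f (c + v) + f (c - v) - (2 : ℝ) • f c)
      (deriv f (c + v) - deriv f (c - v)) v := fun v hv => by
    have hadd := (hf (c + v) ⟨by linarith [hv.1], by linarith [hv.2]⟩).differentiableAt two_ne_zero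
    have hsub := (hf (c - v) ⟨by linarith [hv.2], by linarith [hv.1]⟩).differentiableAt two_ne_zero
    simpa only [sub_eq_add_neg] using ((hadd.hasDerivAt.comp_const_add c v).fun_add
      (hsub.hasDerivAt.comp_const_sub c v)).sub_const ((2 : ℝ) • f c)
  refine image_norm_le_of_norm_deriv_right_le_deriv_boundary
    (f := fun v => f (c + v) + f (c - v) - (2 : ℝ) • f c) (B := fun v => M * v ^ 2)
    (B' := fun v => 2 * M * v) (fun v hv => (hderiv v hv).continuousAt.continuousWithinAt)
    (fun v hv => (hderiv v (Ico_subset_Icc_self hv)).hasDerivWithinAt) ?_ (fun v => ?_)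
    (fun v hv => ?_) (right_mem_Icc.2 hu)
  · simp [two_smul]
  · simpa [mul_assoc, mul_left_comm] using (hasDerivAt_pow 2 v).const_mul M
  · have hsub : Icc (c - v) (c + v) ⊆ Icc (c - u) (c + u) :=
      Icc_subset_Icc (by linarith [hv.2]) (by linarith [hv.2])
    exact norm_deriv_add_sub_deriv_sub_le (fun x hx => hf x (hsub hx)) (fun x hx => hM x (hsub hx))
      hv.1

lemma integral_symm_interval_eq_integral_add {f : ℝ → E} {c δ : ℝ} (hδ : 0 ≤ δ)
    (hf : ContinuousOn f (Icc (c - δ) (c + δ))) :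
    ∫ x in (c - δ)..(c + δ), f x = ∫ u in (0 : ℝ)..δ, (f (c + u) + f (c - u)) := by
  have hright : ContinuousOn f (uIcc c (c + δ)) := hf.mono <| by
    rw [uIcc_of_le (by linarith)]; exact Icc_subset_Icc_left (by linarith)
  have hleft : ContinuousOn f (uIcc (c - δ) c) := hf.mono <| by
    rw [uIcc_of_le (by linarith)]; exact Icc_subset_Icc_right (by linarith)
  have hadd : ContinuousOn (fun u => f (c + u)) (uIcc 0 δ) := hf.comp (by fun_prop) fun u hu => by
    rw [uIcc_of_le hδ] at hu; exact ⟨by linarith [hu.1], by linarith [hu.2]⟩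
  have hsub : ContinuousOn (fun u => f (c - u)) (uIcc 0 δ) := hf.comp (by fun_prop) fun u hu => by
    rw [uIcc_of_le hδ] at hu; exact ⟨by linarith [hu.2], by linarith [hu.1]⟩
  rw [intervalIntegral.integral_add hadd.intervalIntegrable hsub.intervalIntegrable,
    intervalIntegral.integral_comp_add_left, intervalIntegral.integral_comp_sub_left,
    add_zero, sub_zero, add_comm (∫ x in c..c + δ, f x),
    intervalIntegral.integral_add_adjacent_intervals hleft.intervalIntegrable
      hright.intervalIntegrable]

lemma intervalIntegrable_integral_of_continuousOn {f : ℝ → ℝ → E} {a b a' b' : ℝ} (hab : a ≤ b)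
    (hab' : a' ≤ b') (hf : ContinuousOn (uncurry f) (Icc a b ×ˢ Icc a' b')) :
    IntervalIntegrable (fun s => ∫ t in a'..b', f s t) volume a b := by
  have hint : IntegrableOn (uncurry f) (Ioc a b ×ˢ Ioc a' b') :=
    (hf.integrableOn_compact (isCompact_Icc.prod isCompact_Icc)).mono_set
      (prod_mono Ioc_subset_Icc_self Ioc_subset_Icc_self)
  rw [IntegrableOn, Measure.volume_eq_prod, ← Measure.prod_restrict] at hint
  simp only [intervalIntegrable_iff_integrableOn_Ioc_of_le hab,
    intervalIntegral.integral_of_le hab']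
  exact hint.integral_prod_left

variable [CompleteSpace E]

theorem norm_integral_sub_midpoint_le {f : ℝ → E} {c δ M : ℝ} (hδ : 0 ≤ δ)
    (hf : ∀ x ∈ Icc (c - δ) (c + δ), ContDiffAt ℝ 2 f x)
    (hM : ∀ x ∈ Icc (c - δ) (c + δ), ‖iteratedDeriv 2 f x‖ ≤ M) :
    ‖(∫ x in (c - δ)..(c + δ), f x) - (2 * δ) • f c‖ ≤ M * δ ^ 3 / 3 := by
  have hcont : ContinuousOn f (Icc (c - δ) (c + δ)) :=
    fun x hx => (hf x hx).continuousAt.continuousWithinAt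
  have hpair : IntervalIntegrable (fun u => f (c + u) + f (c - u)) volume 0 δ := by
    refine ContinuousOn.intervalIntegrable ?_
    rw [uIcc_of_le hδ]
    exact (hcont.comp (by fun_prop) fun u hu => ⟨by linarith [hu.1], by linarith [hu.2]⟩).add
      (hcont.comp (by fun_prop) fun u hu => ⟨by linarith [hu.2], by linarith [hu.1]⟩)
  have hsecond : (∫ x in (c - δ)..(c + δ), f x) - (2 * δ) • f c
      = ∫ u in (0 : ℝ)..δ, (f (c + u) + f (c - u) - (2 : ℝ) • f c) := by
    rw [intervalIntegral.integral_sub hpair intervalIntegrable_const,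
      intervalIntegral.integral_const, integral_symm_interval_eq_integral_add hδ hcont, sub_zero,
      smul_smul, mul_comm]
  calc ‖(∫ x in (c - δ)..(c + δ), f x) - (2 * δ) • f c‖
      ≤ ∫ u in (0 : ℝ)..δ, M * u ^ 2 := by
        rw [hsecond]
        refine intervalIntegral.norm_integral_le_of_norm_le hδ (.of_forall fun u hu => ?_)
          (Continuous.intervalIntegrable (by fun_prop) _ _)
        have hsub : Icc (c - u) (c + u) ⊆ Icc (c - δ) (c + δ) :=
          Icc_subset_Icc (by linarith [hu.2]) (by linarith [hu.2])
        exact norm_second_difference_le (fun x hx => hf x (hsub hx)) (fun x hx => hM x (hsub hx))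
          hu.1.le
    _ = M * δ ^ 3 / 3 := by
        rw [intervalIntegral.integral_const_mul, integral_pow]
        push_cast
        ring

lemma norm_integral_midpoint_error_le {f : ℝ → ℝ → E} {a b δ η M : ℝ} (hδ : 0 ≤ δ) (hη : 0 ≤ η)
    (hf : ∀ s ∈ Icc (a - δ) (a + δ), ∀ t ∈ Icc (b - η) (b + η), ContDiffAt ℝ 2 (f s) t)
    (hM : ∀ s ∈ Icc (a - δ) (a + δ), ∀ t ∈ Icc (b - η) (b + η), ‖iteratedDeriv 2 (f s) t‖ ≤ M) :
    ‖∫ s in (a - δ)..(a + δ), ((∫ t in (b - η)..(b + η), f s t) - (2 * η) • f s b)‖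
      ≤ 2 * δ * (M * η ^ 3 / 3) := by
  calc _ ≤ M * η ^ 3 / 3 * |a + δ - (a - δ)| := by
        refine intervalIntegral.norm_integral_le_of_norm_le_const fun s hs => ?_
        rw [uIoc_of_le (by linarith)] at hs
        have hs' := Ioc_subset_Icc_self hs
        exact norm_integral_sub_midpoint_le hη (hf s hs') (hM s hs')
    _ = 2 * δ * (M * η ^ 3 / 3) := by
        rw [add_sub_sub_cancel, ← two_mul, abs_of_nonneg (by positivity), mul_comm]

theorem norm_integral_integral_sub_midpoint_le {f : ℝ → ℝ → E} {a b δ η M₁ M₂ : ℝ}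
    (hδ : 0 ≤ δ) (hη : 0 ≤ η)
    (hf : ∀ s ∈ Icc (a - δ) (a + δ), ∀ t ∈ Icc (b - η) (b + η), ContDiffAt ℝ 2 (uncurry f) (s, t))
    (hM₁ : ∀ s ∈ Icc (a - δ) (a + δ), ‖iteratedDeriv 2 (fun s => f s b) s‖ ≤ M₁)
    (hM₂ : ∀ s ∈ Icc (a - δ) (a + δ), ∀ t ∈ Icc (b - η) (b + η), ‖iteratedDeriv 2 (f s) t‖ ≤ M₂) :
    ‖(∫ s in (a - δ)..(a + δ), ∫ t in (b - η)..(b + η), f s t) - (2 * δ * (2 * η)) • f a b‖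
      ≤ 2 * η * (M₁ * δ ^ 3 / 3) + 2 * δ * (M₂ * η ^ 3 / 3) := by
  have hδ' : a - δ ≤ a + δ := by linarith
  have hη' : b - η ≤ b + η := by linarith
  have hb : b ∈ Icc (b - η) (b + η) := ⟨by linarith, by linarith⟩
  have hfst : ∀ s ∈ Icc (a - δ) (a + δ), ContDiffAt ℝ 2 (fun s => f s b) s := fun s hs =>
    (hf s hs b hb).comp s (contDiffAt_id.prodMk contDiffAt_const)
  have hsnd : ∀ s ∈ Icc (a - δ) (a + δ), ∀ t ∈ Icc (b - η) (b + η), ContDiffAt ℝ 2 (f s) t :=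
    fun s hs t ht => (hf s hs t ht).comp t (contDiffAt_const.prodMk contDiffAt_id)
  have hinner : IntervalIntegrable (fun s => ∫ t in (b - η)..(b + η), f s t) volume
      (a - δ) (a + δ) :=
    intervalIntegrable_integral_of_continuousOn hδ' hη' fun p hp =>
      (hf p.1 hp.1 p.2 hp.2).continuousAt.continuousWithinAt
  have hmid : IntervalIntegrable (fun s => (2 * η) • f s b) volume (a - δ) (a + δ) := by
    refine ContinuousOn.intervalIntegrable fun s hs => ?_
    rw [uIcc_of_le hδ'] at hs
    exact ((hfst s hs).continuousAt.const_smul _).continuousWithinAt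
  have hsplit : (∫ s in (a - δ)..(a + δ), ∫ t in (b - η)..(b + η), f s t)
        - (2 * δ * (2 * η)) • f a b
      = (2 * η) • ((∫ s in (a - δ)..(a + δ), f s b) - (2 * δ) • f a b)
        + ∫ s in (a - δ)..(a + δ), ((∫ t in (b - η)..(b + η), f s t) - (2 * η) • f s b) := by
    rw [intervalIntegral.integral_sub hinner hmid, intervalIntegral.integral_smul, smul_sub,
      smul_smul, mul_comm (2 * η)]
    abel
  have houter : ‖(2 * η) • ((∫ s in (a - δ)..(a + δ), f s b) - (2 * δ) • f a b)‖
      ≤ 2 * η * (M₁ * δ ^ 3 / 3) := by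
    rw [norm_smul, Real.norm_of_nonneg (by linarith)]
    gcongr
    exact norm_integral_sub_midpoint_le hδ hfst hM₁
  rw [hsplit]
  exact (norm_add_le _ _).trans (add_le_add houter (norm_integral_midpoint_error_le hδ hη hsnd hM₂))

end MidpointRule

section BoundedContDiff

lemma exists_norm_le_of_continuous_of_periodic {F : Type*} [SeminormedAddCommGroup F]
    {f : ℝ × ℝ → F} (hf : Continuous f) (hfst : Periodic f (1, 0)) (hsnd : Periodic f (0, 1)) :
    ∃ B, ∀ p, ‖f p‖ ≤ B := by
  obtain ⟨B, hB⟩ := (isCompact_Icc.prod isCompact_Icc).exists_bound_of_continuousOn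
    (s := Icc (0 : ℝ) 1 ×ˢ Icc (0 : ℝ) 1) hf.continuousOn
  refine ⟨B, fun p => ?_⟩
  have hfract : f (Int.fract p.1, Int.fract p.2) = f p := by
    rw [← hfst.sub_zsmul_eq ⌊p.1⌋ (x := p), ← hsnd.sub_zsmul_eq ⌊p.2⌋ (x := p - _)]
    congr 1
    ext <;> simp
  exact hfract ▸ hB _ ⟨⟨Int.fract_nonneg _, (Int.fract_lt_one _).le⟩,
    ⟨Int.fract_nonneg _, (Int.fract_lt_one _).le⟩⟩

variable {E F G : Type*} [NormedAddCommGroup E] [NormedSpace ℝ E] [NormedAddCommGroup F]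
  [NormedSpace ℝ F] [NormedAddCommGroup G] [NormedSpace ℝ G]

/-- `f` is of class `C^n` and its derivatives of order `0, …, n` are all bounded by `B` in norm,
i.e. `f` lies in the closed ball of radius `B` of the space `C^n_b(E, F)`. -/
structure BoundedContDiff (n : ℕ) (B : ℝ) (f : E → F) : Prop where
  contDiff : ContDiff ℝ n f
  norm_iteratedFDeriv_le : ∀ k ≤ n, ∀ x, ‖iteratedFDeriv ℝ k f x‖ ≤ B

namespace BoundedContDiff

variable {n : ℕ} {B : ℝ}

lemma norm_iteratedDeriv_le {f : ℝ → F} (hf : BoundedContDiff n B f) {k : ℕ} (hk : k ≤ n) (x : ℝ) :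
    ‖iteratedDeriv k f x‖ ≤ B :=
  norm_iteratedFDeriv_eq_norm_iteratedDeriv (𝕜 := ℝ) (f := f) ▸ hf.norm_iteratedFDeriv_le k hk x

lemma comp_clm_add {f : E → F} (hf : BoundedContDiff n B f) {L : G →L[ℝ] E} (hL : ‖L‖ ≤ 1)
    (p : E) : BoundedContDiff n B fun x => f (L x + p) where
  contDiff := hf.contDiff.comp (L.contDiff.add contDiff_const)
  norm_iteratedFDeriv_le k hk x := by
    have hshift : ContDiff ℝ n fun y => f (y + p) :=
      hf.contDiff.comp (contDiff_id.add contDiff_const)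
    have hchain : iteratedFDeriv ℝ k (fun x => f (L x + p)) x
        = (iteratedFDeriv ℝ k f (L x + p)).compContinuousLinearMap fun _ => L := by
      rw [← iteratedFDeriv_comp_add_right]
      exact L.iteratedFDeriv_comp_right hshift x (by exact_mod_cast hk)
    calc ‖iteratedFDeriv ℝ k (fun x => f (L x + p)) x‖
        ≤ ‖iteratedFDeriv ℝ k f (L x + p)‖ * ‖L‖ ^ k := by
          rw [hchain]
          simpa using ContinuousMultilinearMap.norm_compContinuousLinearMap_le
            (iteratedFDeriv ℝ k f (L x + p)) fun _ => L
      _ ≤ B * 1 := mul_le_mul (hf.norm_iteratedFDeriv_le k hk _)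
          (pow_le_one₀ (norm_nonneg _) hL) (by positivity)
          ((norm_nonneg _).trans (hf.norm_iteratedFDeriv_le k hk 0))
      _ = B := mul_one B

lemma slice_left {f : E → G → F} (hf : BoundedContDiff n B (uncurry f)) (y : G) :
    BoundedContDiff n B fun x => f x y := by
  simpa using hf.comp_clm_add (ContinuousLinearMap.norm_inl_le_one ℝ E G) (0, y)

lemma slice_right {f : E → G → F} (hf : BoundedContDiff n B (uncurry f)) (x : E) :
    BoundedContDiff n B (f x) := by
  simpa using hf.comp_clm_add (ContinuousLinearMap.norm_inr_le_one ℝ E G) (x, 0)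

end BoundedContDiff

lemma periodic_iteratedFDeriv {f : E → F} {c : E} (hf : Periodic f c) (k : ℕ) :
    Periodic (iteratedFDeriv ℝ k f) c := fun x => by
  rw [← iteratedFDeriv_comp_add_right, funext hf]

lemma exists_boundedContDiff_of_periodic {n : ℕ} {f : ℝ × ℝ → F} (hf : ContDiff ℝ n f)
    (hfst : Periodic f (1, 0)) (hsnd : Periodic f (0, 1)) : ∃ B > 0, BoundedContDiff n B f := by
  have hbound : ∀ k : Fin (n + 1), ∃ B, ∀ p, ‖iteratedFDeriv ℝ k f p‖ ≤ B := fun k =>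
    exists_norm_le_of_continuous_of_periodic
      (hf.continuous_iteratedFDeriv (by exact_mod_cast k.is_le))
      (periodic_iteratedFDeriv hfst k) (periodic_iteratedFDeriv hsnd k)
  choose B hB using hbound
  have hBnonneg : ∀ k, 0 ≤ B k := fun k => (norm_nonneg _).trans (hB k 0)
  have hsum : 0 ≤ ∑ k, B k := Finset.sum_nonneg fun k _ => hBnonneg k
  refine ⟨1 + ∑ k, B k, by positivity, hf, fun k hk p => ?_⟩
  have hle := Finset.single_le_sum (fun k _ => hBnonneg k)
    (Finset.mem_univ (⟨k, Nat.lt_succ_of_le hk⟩ : Fin (n + 1)))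
  linarith [hB ⟨k, Nat.lt_succ_of_le hk⟩ p]

lemma SPK.exists_boundedContDiff {A : ℝ → ℝ → ℂ} (hA : SPK A) (n : ℕ) :
    ∃ B > 0, BoundedContDiff n B (uncurry A) :=
  exists_boundedContDiff_of_periodic (hA.1.of_le (by exact_mod_cast le_top))
    (fun p => by simp [uncurry, hA.2.1]) fun p => by simp [uncurry, hA.2.2]

end BoundedContDiff

section LogSingularity

/-- The logarithmic singularity `log (sin² (π x))`; Mathlib's `Real.log 0 = 0` makes it vanish at
the integers. -/
noncomputable def logSinSq (x : ℝ) : ℝ := Real.log (Real.sin (π * x) ^ 2)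

lemma logSinSq_neg (x : ℝ) : logSinSq (-x) = logSinSq x := by simp [logSinSq]

variable {x : ℝ}

lemma contDiffAt_logSinSq {n : WithTop ℕ∞} (hx : Real.sin (π * x) ≠ 0) :
    ContDiffAt ℝ n logSinSq x :=
  ContDiffAt.log (by fun_prop) (pow_ne_zero 2 hx)

lemma hasDerivAt_logSinSq (hx : Real.sin (π * x) ≠ 0) :
    HasDerivAt logSinSq (2 * π * (Real.cos (π * x) / Real.sin (π * x))) x := by
  have hsin : HasDerivAt (fun y => Real.sin (π * y)) (Real.cos (π * x) * (π * 1)) x :=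
    ((hasDerivAt_id x).const_mul π).sin
  refine ((hsin.fun_pow 2).log (pow_ne_zero 2 hx)).congr_deriv ?_
  simp only [Nat.cast_ofNat, Nat.add_one_sub_one, pow_one, mul_one]
  field_simp

lemma eventually_sin_pi_mul_ne_zero (hx : Real.sin (π * x) ≠ 0) :
    ∀ᶠ y in nhds x, Real.sin (π * y) ≠ 0 :=
  ContinuousAt.eventually_ne (g := fun y => Real.sin (π * y)) (by fun_prop) hx

lemma iteratedDeriv_two_logSinSq (hx : Real.sin (π * x) ≠ 0) :
    iteratedDeriv 2 logSinSq x = -(2 * π ^ 2 / Real.sin (π * x) ^ 2) := by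
  have hderiv : deriv logSinSq =ᶠ[nhds x]
      fun y => 2 * π * (Real.cos (π * y) / Real.sin (π * y)) := by
    filter_upwards [eventually_sin_pi_mul_ne_zero hx] with y hy using (hasDerivAt_logSinSq hy).deriv
  have hlin : HasDerivAt (fun y => π * y) (π * 1) x := (hasDerivAt_id x).const_mul π
  rw [iteratedDeriv_succ, iteratedDeriv_one, hderiv.deriv_eq,
    ((hlin.cos.fun_div hlin.sin hx).const_mul (2 * π)).deriv]
  field_simp
  linear_combination -Real.sin_sq_add_cos_sq (π * x)

lemma norm_iteratedDeriv_logSinSq_le (hx : Real.sin (π * x) ≠ 0) {k : ℕ} (hk : k ≤ 2) :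
    ‖iteratedDeriv k logSinSq x‖ ≤ 2 * π ^ 2 / Real.sin (π * x) ^ 2 := by
  have hpos : 0 < Real.sin (π * x) ^ 2 := by positivity
  have hone : Real.sin (π * x) ^ 2 ≤ 1 := Real.sin_sq_le_one _
  interval_cases k
  · rw [iteratedDeriv_zero, logSinSq, Real.norm_of_nonpos (Real.log_nonpos hpos.le hone)]
    have hlog := Real.one_sub_inv_le_log_of_pos hpos
    calc -Real.log (Real.sin (π * x) ^ 2) ≤ 1 * (Real.sin (π * x) ^ 2)⁻¹ := by linarith
      _ ≤ 2 * π ^ 2 * (Real.sin (π * x) ^ 2)⁻¹ := by gcongr; nlinarith [Real.pi_gt_three]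
      _ = _ := (div_eq_mul_inv _ _).symm
  · have hprod : |Real.cos (π * x)| * |Real.sin (π * x)| ≤ π := by
      nlinarith [Real.abs_cos_le_one (π * x), Real.abs_sin_le_one (π * x), Real.pi_gt_three,
        abs_nonneg (Real.cos (π * x)), abs_nonneg (Real.sin (π * x))]
    rw [iteratedDeriv_one, (hasDerivAt_logSinSq hx).deriv, Real.norm_eq_abs, abs_mul, abs_div,
      abs_of_pos Real.two_pi_pos, ← sq_abs (Real.sin _)]
    calc 2 * π * (|Real.cos (π * x)| / |Real.sin (π * x)|)
        = 2 * π * (|Real.cos (π * x)| * |Real.sin (π * x)|) / |Real.sin (π * x)| ^ 2 := by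
          field_simp
      _ ≤ 2 * π * π / |Real.sin (π * x)| ^ 2 := by gcongr
      _ = 2 * π ^ 2 / |Real.sin (π * x)| ^ 2 := by ring
  · rw [iteratedDeriv_two_logSinSq hx, norm_neg, Real.norm_of_nonneg (by positivity)]

end LogSingularity

lemma norm_iteratedDeriv_smul_le {𝕜 E : Type*} [NontriviallyNormedField 𝕜]
    [NormedAddCommGroup E] [NormedSpace 𝕜 E] {f : 𝕜 → 𝕜} {g : 𝕜 → E} {x : 𝕜} {D B : ℝ} {n : ℕ}
    (hf : ContDiffAt 𝕜 n f x) (hg : ContDiffAt 𝕜 n g x)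
    (hD : ∀ k ≤ n, ‖iteratedDeriv k f x‖ ≤ D) (hB : ∀ k ≤ n, ‖iteratedDeriv k g x‖ ≤ B) :
    ‖iteratedDeriv n (f • g) x‖ ≤ 2 ^ n * D * B := by
  have hleibniz := iteratedDerivWithin_smul (mem_univ x) uniqueDiffOn_univ hf.contDiffWithinAt
    hg.contDiffWithinAt
  simp only [iteratedDerivWithin_univ] at hleibniz
  have hD0 : 0 ≤ D := (norm_nonneg _).trans (hD 0 n.zero_le)
  calc ‖iteratedDeriv n (f • g) x‖
      ≤ ∑ k ∈ Finset.range (n + 1), (n.choose k : ℝ) * (D * B) := by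
        rw [hleibniz]
        refine norm_sum_le_of_le _ fun k hk => (norm_nsmul_le).trans ?_
        rw [norm_smul]
        gcongr
        · exact hD k (by simpa [Nat.lt_succ_iff] using hk)
        · exact hB (n - k) (n.sub_le k)
    _ = 2 ^ n * D * B := by
        rw [← Finset.sum_mul, mul_assoc]
        exact_mod_cast congrArg (· * (D * B)) (congrArg Nat.cast (Nat.sum_range_choose n))

section LogKernel

variable {α β : ℝ}

lemma logKer_eq_smul (A K : ℝ → ℝ → ℂ) (s t : ℝ) :
    logKer A K s t = logSinSq (s - t) • (Complex.I / (2 * π) * A s t) + K s t := by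
  rw [logKer, logSinSq, Complex.real_smul, mul_comm]

lemma logKer_eq_smul_swap (A K : ℝ → ℝ → ℂ) (s t : ℝ) :
    logKer A K s t = logSinSq (t - s) • (Complex.I / (2 * π) * A s t) + K s t := by
  rw [logKer_eq_smul, ← logSinSq_neg, neg_sub]

lemma contDiffAt_logKer {A K : ℝ → ℝ → ℂ} {n : WithTop ℕ∞} {s t : ℝ}
    (hA : ContDiffAt ℝ n (uncurry A) (s, t)) (hK : ContDiffAt ℝ n (uncurry K) (s, t))
    (hst : Real.sin (π * (s - t)) ≠ 0) : ContDiffAt ℝ n (uncurry (logKer A K)) (s, t) := by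
  have hlog : ContDiffAt ℝ n (fun p : ℝ × ℝ => logSinSq (p.1 - p.2)) (s, t) :=
    ContDiffAt.comp (g := logSinSq) (s, t) (contDiffAt_logSinSq hst)
      (contDiffAt_fst.sub contDiffAt_snd)
  exact ((hlog.smul (contDiffAt_const.mul hA)).add hK).congr_of_eventuallyEq
    (.of_forall fun p => logKer_eq_smul A K p.1 p.2)

lemma norm_iteratedDeriv_two_log_smul_add_le {a k : ℝ → ℂ} (ha : BoundedContDiff 2 α a)
    (hk : BoundedContDiff 2 β k) {x τ : ℝ} (hx : Real.sin (π * (x - τ)) ≠ 0) :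
    ‖iteratedDeriv 2 (fun x => logSinSq (x - τ) • (Complex.I / (2 * π) * a x) + k x) x‖
      ≤ (4 * π * α + β) / Real.sin (π * (x - τ)) ^ 2 := by
  have hlog : ContDiffAt ℝ 2 (fun x => logSinSq (x - τ)) x :=
    ContDiffAt.comp (g := logSinSq) x (contDiffAt_logSinSq hx)
      (contDiffAt_id.sub contDiffAt_const)
  have hcoeff : ContDiffAt ℝ 2 (fun x => Complex.I / (2 * π) * a x) x :=
    contDiffAt_const.mul ha.contDiff.contDiffAt
  have hlogBound : ∀ j ≤ 2, ‖iteratedDeriv j (fun x => logSinSq (x - τ)) x‖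
      ≤ 2 * π ^ 2 / Real.sin (π * (x - τ)) ^ 2 := fun j hj => by
    rw [iteratedDeriv_comp_sub_const]
    exact norm_iteratedDeriv_logSinSq_le hx hj
  have hcoeffBound : ∀ j ≤ 2, ‖iteratedDeriv j (fun x => Complex.I / (2 * π) * a x) x‖
      ≤ (2 * π)⁻¹ * α := fun j hj => by
    rw [iteratedDeriv_const_mul_field, norm_mul]
    gcongr
    · simp [abs_of_pos Real.pi_pos]
    · exact ha.norm_iteratedDeriv_le hj x
  have hprod := norm_iteratedDeriv_smul_le (n := 2) hlog hcoeff hlogBound hcoeffBound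
  have hk2 : ‖iteratedDeriv 2 k x‖ ≤ β / Real.sin (π * (x - τ)) ^ 2 := by
    have hβ := hk.norm_iteratedDeriv_le le_rfl x
    exact hβ.trans (le_div_self ((norm_nonneg _).trans hβ) (by positivity) (Real.sin_sq_le_one _))
  calc _ ≤ 2 ^ 2 * (2 * π ^ 2 / Real.sin (π * (x - τ)) ^ 2) * ((2 * π)⁻¹ * α)
          + β / Real.sin (π * (x - τ)) ^ 2 := by
        rw [iteratedDeriv_fun_add (hlog.fun_smul hcoeff) hk.contDiff.contDiffAt]
        exact (norm_add_le _ _).trans (add_le_add hprod hk2)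
    _ = (4 * π * α + β) / Real.sin (π * (x - τ)) ^ 2 := by
        field_simp
        ring

variable {A K : ℝ → ℝ → ℂ} {s t : ℝ}

lemma norm_iteratedDeriv_two_logKer_left_le (hA : BoundedContDiff 2 α (uncurry A))
    (hK : BoundedContDiff 2 β (uncurry K)) (hst : Real.sin (π * (s - t)) ≠ 0) :
    ‖iteratedDeriv 2 (fun s => logKer A K s t) s‖
      ≤ (4 * π * α + β) / Real.sin (π * (s - t)) ^ 2 := by
  simp only [logKer_eq_smul]
  exact norm_iteratedDeriv_two_log_smul_add_le (hA.slice_left t) (hK.slice_left t) hst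

lemma norm_iteratedDeriv_two_logKer_right_le (hA : BoundedContDiff 2 α (uncurry A))
    (hK : BoundedContDiff 2 β (uncurry K)) (hst : Real.sin (π * (s - t)) ≠ 0) :
    ‖iteratedDeriv 2 (logKer A K s) t‖ ≤ (4 * π * α + β) / Real.sin (π * (s - t)) ^ 2 := by
  have hswap : Real.sin (π * (s - t)) = -Real.sin (π * (t - s)) := by
    rw [← Real.sin_neg]
    congr 1
    ring
  rw [hswap, neg_ne_zero] at hst
  rw [hswap, neg_sq, funext (logKer_eq_smul_swap A K s)]
  exact norm_iteratedDeriv_two_log_smul_add_le (hA.slice_right s) (hK.slice_right s) hst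

end LogKernel

section Grid

lemma two_mul_min_le_abs_sin_pi_mul (x : ℝ) :
    2 * min |x| (1 - |x|) ≤ |Real.sin (π * x)| := by
  have hpi := Real.pi_pos
  have hsin : |Real.sin (π * x)| = |Real.sin (π * |x|)| := by
    rcases abs_choice x with hx | hx <;> simp [hx]
  rw [hsin]
  rcases le_or_gt |x| (1 / 2) with hhalf | hhalf
  · calc 2 * min |x| (1 - |x|) ≤ 2 / π * (π * |x|) := by
          field_simp
          exact min_le_left _ _
      _ ≤ Real.sin (π * |x|) := Real.mul_le_sin (by positivity) (by nlinarith)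
      _ ≤ |Real.sin (π * |x|)| := le_abs_self _
  · rcases le_or_gt |x| 1 with hone | hone
    · calc 2 * min |x| (1 - |x|) ≤ 2 / π * (π * (1 - |x|)) := by
            field_simp
            exact min_le_right _ _
        _ ≤ Real.sin (π * (1 - |x|)) := Real.mul_le_sin (by nlinarith) (by nlinarith)
        _ = Real.sin (π * |x|) := by rw [mul_one_sub, Real.sin_pi_sub]
        _ ≤ |Real.sin (π * |x|)| := le_abs_self _
    · have hneg : min |x| (1 - |x|) ≤ 0 := (min_le_right _ _).trans (by linarith)
      linarith [abs_nonneg (Real.sin (π * |x|))]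

lemma sg_eq_tg_sub (h ε : ℝ) (i : ℤ) : sg h ε i = tg h ε i - h / 2 := by
  rw [sg, tg]
  ring

lemma sg_add_one_eq_tg_add (h ε : ℝ) (i : ℤ) : sg h ε (i + 1) = tg h ε i + h / 2 := by
  rw [sg, tg]
  push_cast
  ring

/-- The quadrature cell `[s_{i+ε}, s_{i+1+ε}]` of the `ε`-shifted grid with step `h`; its midpoint
is `t_{i+ε}`. -/
def gridCell (h ε : ℝ) (i : ℤ) : Set ℝ := Icc (sg h ε i) (sg h ε (i + 1))

variable {h ε s t : ℝ} {i j : ℤ}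

lemma gridCell_eq_Icc_tg (h ε : ℝ) (i : ℤ) :
    gridCell h ε i = Icc (tg h ε i - h / 2) (tg h ε i + h / 2) := by
  rw [gridCell, sg_eq_tg_sub, sg_add_one_eq_tg_add]

lemma tg_mem_gridCell (hh : 0 ≤ h) (ε : ℝ) (i : ℤ) : tg h ε i ∈ gridCell h ε i := by
  rw [gridCell_eq_Icc_tg]
  exact ⟨by linarith, by linarith⟩

lemma abs_sub_sub_mul_le_of_mem_gridCell (hε : ε ∈ Icc (-(1 : ℝ) / 2) (1 / 2))
    (hs : s ∈ gridCell h ε i) (ht : t ∈ gridCell h 0 j) :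
    |s - t - (i - j) * h| ≤ 3 / 2 * h := by
  simp only [gridCell, sg, mem_Icc] at hs ht hε
  push_cast at hs ht
  rw [abs_le]
  constructor <;> nlinarith

lemma mul_div_two_le_abs_sin_of_mem_gridCell (hε : ε ∈ Icc (-(1 : ℝ) / 2) (1 / 2))
    (hij : 2 ≤ |i - j|) (hijh : (|i - j| : ℝ) * h ≤ 1 / 2) (hs : s ∈ gridCell h ε i)
    (ht : t ∈ gridCell h 0 j) (hh : 0 ≤ h) :
    (|i - j| : ℝ) * h / 2 ≤ |Real.sin (π * (s - t))| := by
  have hm : (2 : ℝ) ≤ |(i - j : ℝ)| := by exact_mod_cast hij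
  have hclose : |(|s - t| - |(i - j : ℝ)| * h)| ≤ 3 / 2 * h := by
    rw [← abs_of_nonneg hh, ← abs_mul, abs_of_nonneg hh]
    exact (abs_abs_sub_abs_le_abs_sub _ _).trans (abs_sub_sub_mul_le_of_mem_gridCell hε hs ht)
  obtain ⟨hlower, hupper⟩ := abs_le.1 hclose
  have hwidth : 2 * h ≤ |(i - j : ℝ)| * h := by gcongr
  have hlow : |(i - j : ℝ)| * h / 4 ≤ |s - t| := by linarith
  have hupp : |(i - j : ℝ)| * h / 4 ≤ 1 - |s - t| := by linarith
  linarith [two_mul_min_le_abs_sin_pi_mul (s - t), le_min hlow hupp]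

end Grid

theorem norm_Emat_le {V : ℝ → ℝ → ℂ} {h ε M : ℝ} {i j : ℤ} (hh : 0 ≤ h)
    (hV : ∀ s ∈ gridCell h ε i, ∀ t ∈ gridCell h 0 j, ContDiffAt ℝ 2 (uncurry V) (s, t))
    (hleft : ∀ s ∈ gridCell h ε i, ‖iteratedDeriv 2 (fun s => V s (tg h 0 j)) s‖ ≤ M)
    (hright : ∀ s ∈ gridCell h ε i, ∀ t ∈ gridCell h 0 j, ‖iteratedDeriv 2 (V s) t‖ ≤ M) :
    ‖Emat V h ε i j‖ ≤ M * h ^ 4 / 12 := by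
  simp only [gridCell_eq_Icc_tg] at hV hleft hright
  have hmid :=
    norm_integral_integral_sub_midpoint_le (by positivity) (by positivity) hV hleft hright
  have harea : (2 * (h / 2) * (2 * (h / 2))) • V (tg h ε i) (tg h 0 j)
      = (h : ℂ) ^ 2 * V (tg h ε i) (tg h 0 j) := by
    rw [Complex.real_smul]
    push_cast
    ring
  rw [Emat, sg_add_one_eq_tg_add, sg_add_one_eq_tg_add, sg_eq_tg_sub, sg_eq_tg_sub, ← harea]
  exact hmid.trans_eq (by ring)

theorem norm_Emat_logKer_le {A K : ℝ → ℝ → ℂ} {α β h ε d : ℝ} {i j : ℤ}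
    (hA : BoundedContDiff 2 α (uncurry A)) (hK : BoundedContDiff 2 β (uncurry K)) (hh : 0 ≤ h)
    (hd : 0 < d)
    (hsin : ∀ s ∈ gridCell h ε i, ∀ t ∈ gridCell h 0 j, d ≤ |Real.sin (π * (s - t))|) :
    ‖Emat (logKer A K) h ε i j‖ ≤ (4 * π * α + β) / d ^ 2 * h ^ 4 / 12 := by
  have hα := (norm_nonneg _).trans (hA.norm_iteratedFDeriv_le 0 zero_le_two 0)
  have hβ := (norm_nonneg _).trans (hK.norm_iteratedFDeriv_le 0 zero_le_two 0)
  have hne : ∀ s ∈ gridCell h ε i, ∀ t ∈ gridCell h 0 j, Real.sin (π * (s - t)) ≠ 0 :=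
    fun s hs t ht => abs_pos.1 (hd.trans_le (hsin s hs t ht))
  have hbound : ∀ s ∈ gridCell h ε i, ∀ t ∈ gridCell h 0 j,
      (4 * π * α + β) / Real.sin (π * (s - t)) ^ 2 ≤ (4 * π * α + β) / d ^ 2 :=
    fun s hs t ht => by
      rw [← sq_abs (Real.sin _)]
      gcongr
      exact hsin s hs t ht
  have hmid : tg h 0 j ∈ gridCell h 0 j := tg_mem_gridCell hh 0 j
  refine norm_Emat_le hh (fun s hs t ht => ?_) (fun s hs => ?_) fun s hs t ht => ?_
  · exact contDiffAt_logKer hA.contDiff.contDiffAt hK.contDiff.contDiffAt (hne s hs t ht)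
  · exact (norm_iteratedDeriv_two_logKer_left_le hA hK (hne s hs _ hmid)).trans
      (hbound s hs _ hmid)
  · exact (norm_iteratedDeriv_two_logKer_right_le hA hK (hne s hs t ht)).trans (hbound s hs t ht)

theorem stmt_4_general {A K : ℝ → ℝ → ℂ} {α β h ε : ℝ} {i j : ℤ}
    (hA : BoundedContDiff 2 α (uncurry A)) (hK : BoundedContDiff 2 β (uncurry K)) (hh : 0 < h)
    (hε : ε ∈ Icc (-(1 : ℝ) / 2) (1 / 2)) (hij : 2 ≤ |i - j|)
    (hijh : (|i - j| : ℝ) * h ≤ 1 / 2) :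
    ‖Emat (logKer A K) h ε i j‖ ≤ (4 * π * α + β) / 3 * h ^ 2 / (|i - j| : ℝ) ^ 2 := by
  have hm : (0 : ℝ) < |(i - j : ℝ)| := by
    have : (2 : ℝ) ≤ |(i - j : ℝ)| := by exact_mod_cast hij
    linarith
  calc ‖Emat (logKer A K) h ε i j‖
      ≤ (4 * π * α + β) / (|(i - j : ℝ)| * h / 2) ^ 2 * h ^ 4 / 12 :=
        norm_Emat_logKer_le hA hK hh.le (by positivity) fun s hs t ht =>
          mul_div_two_le_abs_sin_of_mem_gridCell hε hij hijh hs ht hh.le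
    _ = (4 * π * α + β) / 3 * h ^ 2 / |(i - j : ℝ)| ^ 2 := by
        field_simp
        ring

/-- off-diagonal bound `|E^ε_{ij}| ≤ C h²/|i−j|²`, uniformly in `ε`. -/
theorem stmt_4
    (A2 K2 : ℝ → ℝ → ℂ) (hA2 : SPK A2) (hK2 : SPK K2) :
    ∃ C > (0:ℝ), ∀ N : ℕ, 0 < N → ∀ ε ∈ Set.Icc (-(1:ℝ)/2) (1/2), ∀ i j : ℤ,
      2 ≤ |i - j| → (|i - j| : ℝ) ≤ (N : ℝ) / 2 →
        ‖Emat (logKer A2 K2) (1 / (N : ℝ)) ε i j‖ ≤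
          C * (1 / (N : ℝ)) ^ 2 / (|i - j| : ℝ) ^ 2 := by
  obtain ⟨α, hα, hA⟩ := hA2.exists_boundedContDiff 2
  obtain ⟨β, hβ, hK⟩ := hK2.exists_boundedContDiff 2
  refine ⟨(4 * π * α + β) / 3, by positivity, fun N hN ε hε i j hij hijN => ?_⟩
  refine stmt_4_general hA hK (by positivity) hε hij ?_
  rw [mul_one_div, div_le_iff₀ (by positivity)]
  linarith
end

section
/- Let ε ∈ [−1/2, 1/2] with ε ≠ 0. Then there exists a constant C_ε > 0, depending only on A₂, K₂ and ε, such that for every integer N ≥ 2 (h = 1/N) the spectral (ℓ²-operator) norm of the N×N quadrature-error matrix satisfies ‖E^ε‖₂ ≤ C_ε h^{3/2}. -/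
/-!
The spectral norm is at most the Frobenius norm, so it suffices to estimate the entries. The entry
of index `(i, j)` integrates the variation of the kernel over a square cell of side `h` about
`(t_{i+ε}, t_j)`. For an integer shift `ε` some cell centres would lie on the singular diagonals;
otherwise `σ = |sin (π (t_{i+ε} - t_j))|` never vanishes. The bound
`|log a - log b| ≤ |a - b| / √(a b)` shows that the logarithm varies by at most `O(h / σ)` times
`1 + √h / √|sin (π (s - t))|`. This last singularity is integrable with integral `O(√h)` over
intervals of length `h`, so it is harmless even where the cell meets the diagonal, and the entry is
`O(h³ / σ)`. Finally `∑_j σ⁻² = O(h⁻²)` by comparison with the convergent series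
`∑_m 1 / (m + ε)²`, so each row has squared `ℓ²` norm `O(h⁴)` and the Frobenius norm is
`O(h^{3/2})`.
-/

open Function MeasureTheory Metric Real Set

section LogSin

lemma abs_log_le_abs_sub_inv {x : ℝ} (hx : 0 < x) : |log x| ≤ |x - x⁻¹| / 2 := by
  calc |log x| ≤ sinh |log x| := self_le_sinh_iff.mpr (abs_nonneg _)
    _ = |x - x⁻¹| / 2 := by rw [← abs_sinh, sinh_log hx, abs_div, abs_two]

lemma abs_log_sub_log_le {a b : ℝ} (ha : 0 < a) (hb : 0 < b) :
    |log a - log b| ≤ |a - b| / (√a * √b) := by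
  have hratio : √a / √b - (√a / √b)⁻¹ = (a - b) / (√a * √b) := by
    have ha' := (sqrt_pos.mpr ha).ne'
    have hb' := (sqrt_pos.mpr hb).ne'
    field_simp
    rw [sq_sqrt ha.le, sq_sqrt hb.le]
  have hlog : log (√a / √b) = (log a - log b) / 2 := by
    rw [log_div (by positivity) (by positivity), log_sqrt ha.le, log_sqrt hb.le, sub_div]
  have h := abs_log_le_abs_sub_inv (x := √a / √b) (by positivity)
  rw [hratio, hlog, abs_div, abs_two, abs_div, abs_of_pos (by positivity : 0 < √a * √b)] at h
  linarith

lemma abs_abs_sin_pi_mul_sub_le (u v : ℝ) :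
    |(|sin (π * u)| - |sin (π * v)|)| ≤ π * |u - v| := by
  calc |(|sin (π * u)| - |sin (π * v)|)| ≤ |sin (π * u) - sin (π * v)| := abs_abs_sub_abs_le _ _
    _ ≤ |π * u - π * v| := abs_sin_sub_sin_le _ _
    _ = π * |u - v| := by rw [← mul_sub, abs_mul, abs_of_pos pi_pos]

lemma abs_log_sin_sq_sub_le {u v r : ℝ} (huv : |u - v| ≤ r) (hu : sin (π * u) ≠ 0)
    (hv : sin (π * v) ≠ 0) :
    |log (sin (π * u) ^ 2) - log (sin (π * v) ^ 2)| ≤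
      2 * π * r / |sin (π * v)| * (1 + √(π * r) * (√|sin (π * u)|)⁻¹) := by
  rw [← sq_abs (sin (π * u)), ← sq_abs (sin (π * v)), log_pow, log_pow]
  have hdist : |(|sin (π * u)| - |sin (π * v)|)| ≤ π * r :=
    (abs_abs_sin_pi_mul_sub_le u v).trans (by gcongr)
  set a := |sin (π * u)|
  set b := |sin (π * v)|
  have ha : 0 < a := abs_pos.mpr hu
  have hb : 0 < b := abs_pos.mpr hv
  have hr : 0 ≤ π * r := (abs_nonneg _).trans hdist
  have hsqrt : √b ≤ √a + √(π * r) := by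
    calc √b ≤ √(a + π * r) := by gcongr; linarith [neg_le_of_abs_le hdist]
      _ ≤ √a + √(π * r) := sqrt_le_iff.mpr ⟨by positivity, by
        nlinarith [sq_sqrt ha.le, sq_sqrt hr, mul_nonneg (sqrt_nonneg a) (sqrt_nonneg (π * r))]⟩
  calc |(2 : ℕ) * log a - (2 : ℕ) * log b| = 2 * |log a - log b| := by
        rw [← mul_sub, abs_mul, Nat.cast_ofNat, abs_two]
    _ ≤ 2 * (π * r / (√a * √b)) := by
        gcongr
        exact (abs_log_sub_log_le ha hb).trans (by gcongr)
    _ = 2 * π * r / b * (√b * (√a)⁻¹) := by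
        have := (sqrt_pos.mpr hb).ne'
        nth_rw 2 [← mul_self_sqrt hb.le]
        field_simp
    _ ≤ 2 * π * r / b * ((√a + √(π * r)) * (√a)⁻¹) := by
        have : 0 ≤ 2 * π * r / b := div_nonneg (by linarith) hb.le
        gcongr
    _ = 2 * π * r / b * (1 + √(π * r) * (√a)⁻¹) := by
        rw [add_mul, mul_inv_cancel₀ (sqrt_pos.mpr ha).ne']

lemma abs_log_sin_sq_le (x : ℝ) : |log (sin x ^ 2)| ≤ 2 / |sin x| := by
  rcases eq_or_ne (sin x) 0 with hx | hx
  · simp [hx]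
  have hpos : 0 < |sin x| := abs_pos.mpr hx
  have hlog := abs_log_mul_self_lt |sin x| hpos (abs_sin_le_one x)
  rw [abs_mul, abs_abs] at hlog
  rw [← sq_abs, log_pow, abs_mul, le_div_iff₀ hpos, Nat.cast_ofNat, abs_two]
  linarith

lemma two_mul_abs_le_abs_sin_pi_mul {x : ℝ} (hx : |x| ≤ 1 / 2) : 2 * |x| ≤ |sin (π * x)| := by
  have habs : |π * x| = π * |x| := by rw [abs_mul, abs_of_pos pi_pos]
  calc 2 * |x| = 2 / π * |π * x| := by rw [habs]; field_simp
    _ ≤ |sin (π * x)| := mul_abs_le_abs_sin (by rw [habs]; nlinarith [pi_pos])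

lemma abs_sin_pi_mul_sub_intCast (x : ℝ) (n : ℤ) : |sin (π * (x - n))| = |sin (π * x)| := by
  rw [mul_sub, mul_comm π n, sin_sub_int_mul_pi, abs_mul, abs_neg_one_zpow, one_mul]

lemma two_mul_abs_sub_round_le_abs_sin_pi_mul (x : ℝ) :
    2 * |x - round x| ≤ |sin (π * x)| :=
  (two_mul_abs_le_abs_sin_pi_mul (abs_sub_round x)).trans_eq (abs_sin_pi_mul_sub_intCast x _)

lemma sin_pi_mul_ne_zero_of_notMem_range_intCast {x : ℝ} (hx : x ∉ range ((↑) : ℤ → ℝ)) :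
    sin (π * x) ≠ 0 := by
  rw [sin_ne_zero_iff]
  intro n hn
  exact hx ⟨n, mul_left_cancel₀ pi_ne_zero (by rw [← hn, mul_comm])⟩

lemma ae_sin_pi_mul_sub_ne_zero (s : ℝ) : ∀ᵐ t : ℝ, sin (π * (s - t)) ≠ 0 := by
  have hcount : (range fun m : ℤ => s - m).Countable := countable_range _
  filter_upwards [hcount.ae_notMem volume] with t ht
  refine sin_pi_mul_ne_zero_of_notMem_range_intCast ?_
  rintro ⟨m, hm⟩
  exact ht ⟨m, by simp [hm]⟩

end LogSin

section SingularIntegral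

lemma intervalIntegrable_inv_sqrt_abs (a b : ℝ) :
    IntervalIntegrable (fun x : ℝ => (√|x|)⁻¹) volume a b := by
  refine intervalIntegrable_of_even (by simp) fun x hx => ?_
  refine (intervalIntegral.intervalIntegrable_rpow' (r := -(1 / 2)) (by norm_num)).congr ?_
  intro y hy
  rw [uIoc_of_le hx.le] at hy
  simp only [abs_of_pos hy.1, sqrt_eq_rpow, rpow_neg hy.1.le]

lemma integral_inv_sqrt_abs {h : ℝ} (hh : 0 ≤ h) :
    ∫ x in (-h)..h, (√|x|)⁻¹ = 4 * √h := by
  have hpos : ∫ x in 0..h, (√|x|)⁻¹ = 2 * √h := by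
    calc ∫ x in 0..h, (√|x|)⁻¹ = ∫ x in 0..h, x ^ (-(1 / 2) : ℝ) := by
          refine intervalIntegral.integral_congr fun x hx => ?_
          rw [uIcc_of_le hh] at hx
          simp only [abs_of_nonneg hx.1, sqrt_eq_rpow, rpow_neg hx.1]
      _ = 2 * √h := by
          rw [integral_rpow (Or.inl (by norm_num)), sqrt_eq_rpow]
          norm_num
          ring
  have hneg : ∫ x in (-h)..0, (√|x|)⁻¹ = 2 * √h := by
    rw [← hpos]
    simpa using (intervalIntegral.integral_comp_neg (a := 0) (b := h) fun x => (√|x|)⁻¹).symm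
  rw [← intervalIntegral.integral_add_adjacent_intervals
    (intervalIntegrable_inv_sqrt_abs (-h) 0) (intervalIntegrable_inv_sqrt_abs 0 h), hneg, hpos]
  ring

lemma periodic_abs_sin_pi_mul : Periodic (fun u : ℝ => |sin (π * u)|) 1 := fun u => by
  simpa using (abs_sin_pi_mul_sub_intCast (u + 1) 1).symm

lemma inv_sqrt_abs_sin_pi_mul_le {u : ℝ} (hu : |u| ≤ 1 / 2) :
    (√|sin (π * u)|)⁻¹ ≤ (√|u|)⁻¹ := by
  rcases eq_or_ne u 0 with rfl | hu0
  · simp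
  have hpos : 0 < |u| := abs_pos.mpr hu0
  exact inv_anti₀ (sqrt_pos.mpr hpos)
    (sqrt_le_sqrt (by linarith [two_mul_abs_le_abs_sin_pi_mul hu]))

lemma intervalIntegrable_inv_sqrt_abs_sin_pi_mul (a b : ℝ) :
    IntervalIntegrable (fun u => (√|sin (π * u)|)⁻¹) volume a b := by
  refine (periodic_abs_sin_pi_mul.comp fun x => (√x)⁻¹).intervalIntegrable one_ne_zero
    (t := -(1 / 2)) ?_ a b
  refine (intervalIntegrable_inv_sqrt_abs _ _).mono_fun' (by fun_prop) ?_
  refine ae_restrict_of_forall_mem measurableSet_uIoc fun u hu => ?_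
  rw [uIoc_of_le (by norm_num)] at hu
  simp only [comp_apply]
  rw [norm_of_nonneg (by positivity)]
  exact inv_sqrt_abs_sin_pi_mul_le (abs_le.mpr ⟨hu.1.le, by linarith [hu.2]⟩)

-- Over an interval shorter than a period, the part of `g` below the level `c` contributes at most
-- `c` times the length, and the part above it at most what it contributes over a whole period.
lemma integral_le_mul_add_integral_posPart_of_periodic {g : ℝ → ℝ} {T : ℝ} (hg : Periodic g T)
    (hgi : ∀ a b, IntervalIntegrable g volume a b) {h : ℝ} (hh : 0 ≤ h) (hhT : h ≤ T)
    (a b c : ℝ) :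
    ∫ u in a..(a + h), g u ≤ h * c + ∫ u in b..(b + T), max (g u - c) 0 := by
  have hexc (a b : ℝ) : IntervalIntegrable (fun u => max (g u - c) 0) volume a b := by
    have hsub := (hgi a b).sub (intervalIntegrable_const (c := c))
    exact ⟨hsub.1.pos_part, hsub.2.pos_part⟩
  calc ∫ u in a..(a + h), g u
      ≤ ∫ u in a..(a + h), (c + max (g u - c) 0) := by
        refine intervalIntegral.integral_mono (by linarith) (hgi _ _)
          (intervalIntegrable_const.add (hexc _ _)) fun u => ?_
        linarith [le_max_left (g u - c) 0]
    _ = h * c + ∫ u in a..(a + h), max (g u - c) 0 := by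
        rw [intervalIntegral.integral_add intervalIntegrable_const (hexc _ _)]
        simp
    _ ≤ h * c + ∫ u in a..(a + T), max (g u - c) 0 := by
        gcongr
        exact intervalIntegral.integral_mono_interval le_rfl (by linarith) (by linarith)
          (.of_forall fun u => le_max_right _ _) (hexc _ _)
    _ = h * c + ∫ u in b..(b + T), max (g u - c) 0 := by
        congr 1
        exact (hg.comp fun x => max (x - c) 0).intervalIntegral_add_eq a b

lemma integral_inv_sqrt_abs_sin_pi_mul_le (a : ℝ) {h : ℝ} (hh : 0 < h) (hh1 : h ≤ 1) :
    ∫ u in a..(a + h), (√|sin (π * u)|)⁻¹ ≤ 5 * √h := by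
  have hsing : Integrable ((Ioc (-h) h).indicator fun u => (√|u|)⁻¹) := by
    rw [integrable_indicator_iff measurableSet_Ioc]
    exact (intervalIntegrable_inv_sqrt_abs (-h) h).1
  have hexc (u : ℝ) (hu : u ∈ Icc (-(1 / 2)) (-(1 / 2) + 1 : ℝ)) :
      max ((√|sin (π * u)|)⁻¹ - (√h)⁻¹) 0 ≤ (Ioc (-h) h).indicator (fun u => (√|u|)⁻¹) u := by
    refine max_le ?_ (indicator_nonneg (fun _ _ => by positivity) u)
    have hle := inv_sqrt_abs_sin_pi_mul_le (abs_le.mpr ⟨hu.1, by linarith [hu.2]⟩)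
    by_cases huh : u ∈ Ioc (-h) h
    · rw [indicator_of_mem huh]
      linarith [inv_nonneg.mpr (sqrt_nonneg h)]
    · have hfar : h ≤ |u| := by
        by_contra! hlt
        exact huh ⟨(abs_lt.mp hlt).1, (abs_lt.mp hlt).2.le⟩
      rw [indicator_of_notMem huh, sub_nonpos]
      exact hle.trans (by gcongr)
  calc ∫ u in a..(a + h), (√|sin (π * u)|)⁻¹
      ≤ h * (√h)⁻¹ + ∫ u in (-(1 / 2))..(-(1 / 2) + 1), max ((√|sin (π * u)|)⁻¹ - (√h)⁻¹) 0 :=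
        integral_le_mul_add_integral_posPart_of_periodic
          (periodic_abs_sin_pi_mul.comp fun x => (√x)⁻¹)
          intervalIntegrable_inv_sqrt_abs_sin_pi_mul hh.le hh1 _ _ _
    _ ≤ √h + ∫ u in (-(1 / 2))..(-(1 / 2) + 1), (Ioc (-h) h).indicator (fun u => (√|u|)⁻¹) u := by
        have hsub := (intervalIntegrable_inv_sqrt_abs_sin_pi_mul (-(1 / 2)) (-(1 / 2) + 1)).sub
          (intervalIntegrable_const (c := (√h)⁻¹))
        rw [← div_eq_mul_inv, div_sqrt]
        gcongr
        exact intervalIntegral.integral_mono_on (by norm_num)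
          ⟨hsub.1.pos_part, hsub.2.pos_part⟩ hsing.intervalIntegrable hexc
    _ ≤ √h + ∫ u, (Ioc (-h) h).indicator (fun u => (√|u|)⁻¹) u := by
        rw [intervalIntegral.integral_of_le (by norm_num)]
        exact (add_le_add_iff_left _).mpr (setIntegral_le_integral hsing
          (.of_forall (indicator_nonneg fun _ _ => by positivity)))
    _ = 5 * √h := by
        rw [integral_indicator measurableSet_Ioc, ← intervalIntegral.integral_of_le (by linarith),
          integral_inv_sqrt_abs hh.le]
        ring

end SingularIntegral

section MidpointError

lemma norm_integral_sub_smul_le_integral {E : Type*} [NormedAddCommGroup E] [NormedSpace ℝ E]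
    [CompleteSpace E] {f : ℝ → E} {φ : ℝ → ℝ} {a b : ℝ} (hab : a ≤ b) (w : E)
    (hf : AEStronglyMeasurable f (volume.restrict (Ioc a b)))
    (hφ : IntervalIntegrable φ volume a b)
    (hle : ∀ᵐ t, t ∈ Ioc a b → ‖f t - w‖ ≤ φ t) :
    ‖(∫ t in a..b, f t) - (b - a) • w‖ ≤ ∫ t in a..b, φ t := by
  have hint : IntervalIntegrable (fun t => f t - w) volume a b := by
    rw [intervalIntegrable_iff_integrableOn_Ioc_of_le hab] at hφ ⊢
    exact hφ.mono' (hf.sub aestronglyMeasurable_const)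
      ((ae_restrict_iff' measurableSet_Ioc).mpr hle)
  have hsub : ∫ t in a..b, f t - w = (∫ t in a..b, f t) - (b - a) • w := by
    have hfi : IntervalIntegrable f volume a b := by
      simpa using hint.add (intervalIntegrable_const (c := w))
    rw [intervalIntegral.integral_sub hfi intervalIntegrable_const,
      intervalIntegral.integral_const]
  rw [← hsub]
  exact intervalIntegral.norm_integral_le_of_norm_le hab hle hφ

lemma norm_integral_integral_sub_smul_le {E : Type*} [NormedAddCommGroup E] [NormedSpace ℝ E]
    [CompleteSpace E] {f : ℝ → ℝ → E} {φ : ℝ → ℝ → ℝ} {a b c d B : ℝ} (hab : a ≤ b) (hcd : c ≤ d)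
    (w : E) (hf : StronglyMeasurable (uncurry f))
    (hφ : ∀ s ∈ Ioc a b, IntervalIntegrable (φ s) volume c d)
    (hle : ∀ s ∈ Ioc a b, ∀ᵐ t, t ∈ Ioc c d → ‖f s t - w‖ ≤ φ s t)
    (hB : ∀ s ∈ Ioc a b, ∫ t in c..d, φ s t ≤ B) :
    ‖(∫ s in a..b, ∫ t in c..d, f s t) - (b - a) • (d - c) • w‖ ≤ (b - a) * B := by
  have hmeas : StronglyMeasurable fun s => ∫ t in c..d, f s t := by
    simp only [intervalIntegral.integral_of_le hcd]
    exact hf.integral_prod_right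
  calc ‖(∫ s in a..b, ∫ t in c..d, f s t) - (b - a) • (d - c) • w‖ ≤ ∫ _ in a..b, B :=
        norm_integral_sub_smul_le_integral hab _ hmeas.aestronglyMeasurable
          intervalIntegrable_const <| .of_forall fun s hs =>
            (norm_integral_sub_smul_le_integral hcd w
              (hf.comp_measurable measurable_prodMk_left).aestronglyMeasurable
              (hφ s hs) (hle s hs)).trans (hB s hs)
    _ = (b - a) * B := by rw [intervalIntegral.integral_const, smul_eq_mul]

end MidpointError

section CellEstimate

variable {A K : ℝ → ℝ → ℂ}

lemma measurable_logKer (hA : Measurable (uncurry A)) (hK : Measurable (uncurry K)) :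
    Measurable (uncurry (logKer A K)) := by
  have hlog : Measurable fun p : ℝ × ℝ => (log (sin (π * (p.1 - p.2)) ^ 2) : ℂ) := by fun_prop
  exact ((hA.const_mul _).mul hlog).add hK

lemma norm_logKer_sub_le (s t s₀ t₀ : ℝ) :
    ‖logKer A K s t - logKer A K s₀ t₀‖ ≤
      ‖A s t‖ * |log (sin (π * (s - t)) ^ 2) - log (sin (π * (s₀ - t₀)) ^ 2)|
        + ‖A s t - A s₀ t₀‖ * |log (sin (π * (s₀ - t₀)) ^ 2)| + ‖K s t - K s₀ t₀‖ := by
  have hprefactor : ‖Complex.I / (2 * π)‖ ≤ 1 := by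
    rw [norm_div, Complex.norm_I, norm_mul, Complex.norm_two, Complex.norm_of_nonneg pi_nonneg]
    exact div_le_one_of_le₀ (by linarith [pi_gt_three]) (by positivity)
  unfold logKer
  set l := log (sin (π * (s - t)) ^ 2)
  set l₀ := log (sin (π * (s₀ - t₀)) ^ 2)
  calc ‖Complex.I / (2 * π) * A s t * l + K s t - (Complex.I / (2 * π) * A s₀ t₀ * l₀ + K s₀ t₀)‖
      = ‖Complex.I / (2 * π) * (A s t * (l - l₀ : ℝ) + (A s t - A s₀ t₀) * l₀)
          + (K s t - K s₀ t₀)‖ := by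
        push_cast
        ring_nf
    _ ≤ 1 * (‖A s t‖ * |l - l₀| + ‖A s t - A s₀ t₀‖ * |l₀|) + ‖K s t - K s₀ t₀‖ := by
        refine (norm_add_le _ _).trans ?_
        gcongr
        rw [norm_mul]
        gcongr
        refine (norm_add_le _ _).trans_eq ?_
        simp only [norm_mul, Complex.norm_real, norm_eq_abs]
    _ = _ := by rw [one_mul]

variable {s t s₀ t₀ h M : ℝ} {LA LK : NNReal}

lemma norm_logKer_sub_le_of_lipschitzOnWith
    (hM : ∀ p ∈ closedBall (s₀, t₀) (h / 2), ‖uncurry A p‖ ≤ M)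
    (hA : LipschitzOnWith LA (uncurry A) (closedBall (s₀, t₀) (h / 2)))
    (hK : LipschitzOnWith LK (uncurry K) (closedBall (s₀, t₀) (h / 2)))
    (hst : (s, t) ∈ closedBall (s₀, t₀) (h / 2))
    (hsin : sin (π * (s - t)) ≠ 0) (hsin₀ : sin (π * (s₀ - t₀)) ≠ 0) :
    ‖logKer A K s t - logKer A K s₀ t₀‖ ≤
      h / |sin (π * (s₀ - t₀))| *
        (2 * π * M + LA + LK + 2 * π * M * √(π * h) * (√|sin (π * (s - t))|)⁻¹) := by
  have hh : 0 ≤ h / 2 := nonempty_closedBall.mp ⟨_, hst⟩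
  have hcenter := mem_closedBall_self (x := (s₀, t₀)) hh
  have hdist : |(s - t) - (s₀ - t₀)| ≤ h := by
    rw [mem_closedBall, Prod.dist_eq, max_le_iff, dist_eq, dist_eq] at hst
    calc |(s - t) - (s₀ - t₀)| = |(s - s₀) - (t - t₀)| := by ring_nf
      _ ≤ |s - s₀| + |t - t₀| := abs_sub _ _
      _ ≤ h := by linarith [hst.1, hst.2]
  have hAM : ‖A s t‖ ≤ M := hM _ hst
  have hAL : ‖A s t - A s₀ t₀‖ ≤ LA * (h / 2) :=
    (hA.norm_sub_le hst hcenter).trans (by gcongr; rwa [← mem_closedBall_iff_norm])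
  have hKL : ‖K s t - K s₀ t₀‖ ≤ LK * (h / 2) :=
    (hK.norm_sub_le hst hcenter).trans (by gcongr; rwa [← mem_closedBall_iff_norm])
  have hM0 : 0 ≤ M := (norm_nonneg _).trans hAM
  refine (norm_logKer_sub_le s t s₀ t₀).trans ?_
  have hlog := abs_log_sin_sq_sub_le hdist hsin hsin₀
  have hlog₀ := abs_log_sin_sq_le (π * (s₀ - t₀))
  have hσ1 := abs_sin_le_one (π * (s₀ - t₀))
  set σ := |sin (π * (s₀ - t₀))|
  have hσ : 0 < σ := abs_pos.mpr hsin₀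
  calc _ ≤ M * (2 * π * h / σ * (1 + √(π * h) * (√|sin (π * (s - t))|)⁻¹))
        + LA * (h / 2) * (2 / σ) + LK * (h / 2) * (2 / σ) := by
        gcongr
        refine hKL.trans (le_mul_of_one_le_right (by positivity) ?_)
        rw [one_le_div hσ]
        linarith
    _ = _ := by
        field_simp
        ring

lemma intervalIntegrable_inv_sqrt_abs_sin_pi_mul_sub (s a b : ℝ) :
    IntervalIntegrable (fun t => (√|sin (π * (s - t))|)⁻¹) volume a b := by
  simpa using (intervalIntegrable_inv_sqrt_abs_sin_pi_mul (s - a) (s - b)).comp_sub_left s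

lemma integral_inv_sqrt_abs_sin_pi_mul_sub_le (s t₀ : ℝ) (hh : 0 < h) (hh1 : h ≤ 1) :
    ∫ t in (t₀ - h / 2)..(t₀ + h / 2), (√|sin (π * (s - t))|)⁻¹ ≤ 5 * √h := by
  rw [intervalIntegral.integral_comp_sub_left fun u => (√|sin (π * u)|)⁻¹]
  convert integral_inv_sqrt_abs_sin_pi_mul_le (s - (t₀ + h / 2)) hh hh1 using 2
  ring

lemma integral_add_mul_inv_sqrt_abs_sin_pi_mul_sub_le {c d : ℝ} (hd : 0 ≤ d) (s t₀ : ℝ)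
    (hh : 0 < h) (hh1 : h ≤ 1) :
    ∫ t in (t₀ - h / 2)..(t₀ + h / 2), (c + d * (√|sin (π * (s - t))|)⁻¹) ≤
      h * c + d * (5 * √h) := by
  rw [intervalIntegral.integral_add intervalIntegrable_const
    ((intervalIntegrable_inv_sqrt_abs_sin_pi_mul_sub s _ _).const_mul d),
    intervalIntegral.integral_const, intervalIntegral.integral_const_mul, smul_eq_mul,
    add_sub_sub_cancel, add_halves]
  gcongr
  exact integral_inv_sqrt_abs_sin_pi_mul_sub_le s t₀ hh hh1

lemma norm_integral_logKer_sub_le (hh : 0 < h) (hh1 : h ≤ 1)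
    (hAmeas : Measurable (uncurry A)) (hKmeas : Measurable (uncurry K))
    (hM : ∀ p ∈ closedBall (s₀, t₀) (h / 2), ‖uncurry A p‖ ≤ M)
    (hA : LipschitzOnWith LA (uncurry A) (closedBall (s₀, t₀) (h / 2)))
    (hK : LipschitzOnWith LK (uncurry K) (closedBall (s₀, t₀) (h / 2)))
    (hsin₀ : sin (π * (s₀ - t₀)) ≠ 0) :
    ‖(∫ s in (s₀ - h / 2)..(s₀ + h / 2), ∫ t in (t₀ - h / 2)..(t₀ + h / 2), logKer A K s t)
        - (h : ℂ) ^ 2 * logKer A K s₀ t₀‖ ≤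
      (2 * π * M * (1 + 5 * √π) + LA + LK) * h ^ 3 / |sin (π * (s₀ - t₀))| := by
  have hM0 : 0 ≤ M := (norm_nonneg _).trans (hM _ (mem_closedBall_self (by positivity)))
  have hcell {s t : ℝ} (hs : s ∈ Ioc (s₀ - h / 2) (s₀ + h / 2))
      (ht : t ∈ Ioc (t₀ - h / 2) (t₀ + h / 2)) : (s, t) ∈ closedBall (s₀, t₀) (h / 2) := by
    rw [← closedBall_prod_same, closedBall_eq_Icc, closedBall_eq_Icc]
    exact ⟨Ioc_subset_Icc_self hs, Ioc_subset_Icc_self ht⟩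
  have hmidpoint := norm_integral_integral_sub_smul_le (a := s₀ - h / 2) (b := s₀ + h / 2)
    (c := t₀ - h / 2) (d := t₀ + h / 2) (by linarith) (by linarith) (logKer A K s₀ t₀)
    (measurable_logKer hAmeas hKmeas).stronglyMeasurable
    (fun s _ => ((intervalIntegrable_const.add
      ((intervalIntegrable_inv_sqrt_abs_sin_pi_mul_sub s _ _).const_mul _)).const_mul _))
    (fun s hs => (ae_sin_pi_mul_sub_ne_zero s).mono fun t hsin ht =>
      norm_logKer_sub_le_of_lipschitzOnWith hM hA hK (hcell hs ht) hsin hsin₀)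
    (fun s _ => by
      rw [intervalIntegral.integral_const_mul]
      exact mul_le_mul_of_nonneg_left
        (integral_add_mul_inv_sqrt_abs_sin_pi_mul_sub_le (by positivity) s t₀ hh hh1)
        (by positivity))
  simp only [add_sub_sub_cancel, add_halves, smul_smul, ← sq] at hmidpoint
  simpa only [Complex.real_smul, Complex.ofReal_pow] using hmidpoint.trans_eq (by
    rw [sqrt_mul pi_nonneg]
    linear_combination
      10 * π * M * √π * h ^ 2 / |sin (π * (s₀ - t₀))| * mul_self_sqrt hh.le)

lemma sg_eq_tg_sub_half (h ε : ℝ) (j : ℤ) : sg h ε j = tg h ε j - h / 2 := by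
  unfold sg tg
  ring

lemma sg_add_one_eq_tg_add_half (h ε : ℝ) (j : ℤ) : sg h ε (j + 1) = tg h ε j + h / 2 := by
  unfold sg tg
  push_cast
  ring

end CellEstimate

section SineSum

variable {ε : ℝ}

lemma sin_pi_mul_intCast_add_div_ne_zero (hε : ε ∉ range ((↑) : ℤ → ℝ)) {N : ℕ} (hN : 0 < N)
    (m : ℤ) : sin (π * ((m + ε) / N)) ≠ 0 := by
  refine sin_pi_mul_ne_zero_of_notMem_range_intCast ?_
  rintro ⟨k, hk⟩
  refine hε ⟨k * N - m, ?_⟩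
  push_cast
  rw [hk]
  field_simp
  ring

lemma exists_modEq_inv_sin_sq_le (hε : ε ∉ range ((↑) : ℤ → ℝ)) {N : ℕ} (hN : 0 < N) (m : ℤ) :
    ∃ k : ℤ, k ≡ m [ZMOD N] ∧
      (sin (π * ((m + ε) / N)) ^ 2)⁻¹ ≤ N ^ 2 * (1 / |k + ε| ^ (2 : ℝ)) := by
  set x := (m + ε) / N with hx
  refine ⟨m - N * round x, by simp [Int.modEq_iff_dvd], ?_⟩
  have hk : ((m - N * round x : ℤ) : ℝ) + ε = N * (x - round x) := by
    push_cast
    rw [hx]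
    field_simp
    ring
  have hne : x - round x ≠ 0 := by
    intro h0
    exact hε ⟨-(m - N * round x), by push_cast at hk ⊢; rw [h0] at hk; linarith⟩
  have hpos := abs_pos.mpr hne
  have hsin : |x - round x| ≤ |sin (π * x)| := by
    linarith [two_mul_abs_sub_round_le_abs_sin_pi_mul x]
  rw [hk, rpow_two, sq_abs, mul_pow, ← sq_abs (sin _), ← sq_abs (x - _)]
  calc (|sin (π * x)| ^ 2)⁻¹ ≤ (|x - round x| ^ 2)⁻¹ := by gcongr
    _ = _ := by field_simp

lemma exists_sum_inv_sin_sq_le (hε : ε ∉ range ((↑) : ℤ → ℝ)) :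
    ∃ S > 0, ∀ N : ℕ, 0 < N → ∀ i : ℤ,
      ∑ j : Fin N, (sin (π * (((i - (j : ℕ) : ℤ) + ε) / N)) ^ 2)⁻¹ ≤ S * N ^ 2 := by
  have hsum : Summable fun k : ℤ => 1 / |k + ε| ^ (2 : ℝ) :=
    (summable_one_div_int_add_rpow ε 2).mpr one_lt_two
  have hε0 : ε ≠ 0 := fun h => hε ⟨0, by simp [h]⟩
  refine ⟨∑' k : ℤ, 1 / |k + ε| ^ (2 : ℝ),
    hsum.tsum_pos (fun _ => by positivity) 0 (by simpa using pow_pos (abs_pos.mpr hε0) 2),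
    fun N hN i => ?_⟩
  choose k hmod hle using fun j : Fin N => exists_modEq_inv_sin_sq_le hε hN (i - (j : ℕ))
  have hinj : Injective k := fun j j' hjj' => by
    have hdiff : i - (j : ℕ) ≡ i - (j' : ℕ) [ZMOD N] := (hmod j).symm.trans (hjj' ▸ hmod j')
    have hcast : ((j : ℕ) : ℤ) ≡ (j' : ℕ) [ZMOD N] := by
      simpa using (Int.ModEq.refl i).sub hdiff
    exact Fin.ext ((Int.natCast_modEq_iff.mp hcast).eq_of_lt_of_lt j.2 j'.2)
  calc ∑ j : Fin N, (sin (π * (((i - (j : ℕ) : ℤ) + ε) / N)) ^ 2)⁻¹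
      ≤ ∑ j, N ^ 2 * (1 / |k j + ε| ^ (2 : ℝ)) := Finset.sum_le_sum fun j _ => hle j
    _ = (∑ m ∈ Finset.univ.map ⟨k, hinj⟩, 1 / |m + ε| ^ (2 : ℝ)) * N ^ 2 := by
        rw [← Finset.mul_sum, mul_comm, Finset.sum_map]
        rfl
    _ ≤ (∑' m : ℤ, 1 / |m + ε| ^ (2 : ℝ)) * N ^ 2 := by
        gcongr
        exact hsum.sum_le_tsum _ fun _ _ => by positivity

end SineSum

section SpectralNorm

lemma norm_toEuclideanLin_apply_sq_le {𝕜 m n : Type*} [RCLike 𝕜] [Fintype m] [Fintype n]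
    [DecidableEq n] (M : Matrix m n 𝕜) (x : EuclideanSpace 𝕜 n) :
    ‖Matrix.toEuclideanLin M x‖ ^ 2 ≤ (∑ i, ∑ j, ‖M i j‖ ^ 2) * ‖x‖ ^ 2 := by
  rw [EuclideanSpace.norm_sq_eq, EuclideanSpace.norm_sq_eq, Finset.sum_mul]
  gcongr with i
  calc ‖Matrix.toEuclideanLin M x i‖ ^ 2 ≤ (∑ j, ‖M i j‖ * ‖x j‖) ^ 2 := by
        gcongr
        simpa only [Matrix.toLpLin_apply, Matrix.mulVec, dotProduct, norm_mul] using
          norm_sum_le Finset.univ fun j => M i j * x j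
    _ ≤ (∑ j, ‖M i j‖ ^ 2) * ∑ j, ‖x j‖ ^ 2 := Finset.sum_mul_sq_le_sq_mul_sq _ _ _

lemma specNorm_le_of_sum_sq_le {N : ℕ} (M : Matrix (Fin N) (Fin N) ℂ) {B : ℝ} (hB : 0 ≤ B)
    (h : ∑ i, ∑ j, ‖M i j‖ ^ 2 ≤ B ^ 2) : specNorm M ≤ B := by
  refine ContinuousLinearMap.opNorm_le_bound _ hB fun x => ?_
  refine le_of_sq_le_sq ?_ (by positivity)
  rw [mul_pow]
  exact (norm_toEuclideanLin_apply_sq_le M x).trans (by gcongr)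

end SpectralNorm

section ErrorMatrix

variable {A K : ℝ → ℝ → ℂ}

lemma exists_norm_Emat_logKer_le (hA : LocallyLipschitz (uncurry A))
    (hK : LocallyLipschitz (uncurry K)) (R : ℝ) :
    ∃ C > 0, ∀ (h ε : ℝ) (i j : ℤ), 0 < h → h ≤ 1 → |tg h ε i| ≤ R → |tg h 0 j| ≤ R →
      sin (π * (tg h ε i - tg h 0 j)) ≠ 0 →
      ‖Emat (logKer A K) h ε i j‖ ≤ C * h ^ 3 / |sin (π * (tg h ε i - tg h 0 j))| := by
  have hcompact : IsCompact (closedBall (0 : ℝ × ℝ) (R + 1)) := isCompact_closedBall _ _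
  obtain ⟨M, hM⟩ := hcompact.exists_bound_of_continuousOn hA.continuous.continuousOn
  obtain ⟨LA, hLA⟩ := hA.locallyLipschitzOn.exists_lipschitzOnWith_of_compact hcompact
  obtain ⟨LK, hLK⟩ := hK.locallyLipschitzOn.exists_lipschitzOnWith_of_compact hcompact
  refine ⟨2 * π * |M| * (1 + 5 * √π) + LA + LK + 1, by positivity,
    fun h ε i j hh hh1 hi hj hsin => ?_⟩
  have hcell : closedBall (tg h ε i, tg h 0 j) (h / 2) ⊆ closedBall 0 (R + 1) := by
    refine closedBall_subset_closedBall' ?_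
    have hcenter : ‖(tg h ε i, tg h 0 j)‖ ≤ R := norm_prod_le_iff.mpr ⟨hi, hj⟩
    rw [dist_zero_right]
    linarith
  unfold Emat
  rw [sg_add_one_eq_tg_add_half, sg_add_one_eq_tg_add_half, sg_eq_tg_sub_half, sg_eq_tg_sub_half]
  refine (norm_integral_logKer_sub_le hh hh1 hA.continuous.measurable hK.continuous.measurable
    (fun p hp => (hM p (hcell hp)).trans (le_abs_self M)) (hLA.mono hcell) (hLK.mono hcell)
    hsin).trans ?_
  gcongr ?_ * _ / _
  exact le_add_of_nonneg_right zero_le_one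

lemma abs_tg_one_div_le {N : ℕ} (ε : ℝ) (i : Fin N) : |tg (1 / N) ε (i : ℕ)| ≤ 1 + |ε| := by
  have hN : (1 : ℝ) ≤ N := by exact_mod_cast i.pos
  have hi : ((i : ℕ) : ℝ) ≤ N := by exact_mod_cast i.2.le
  have hN0 : (0 : ℝ) < N := by linarith
  rw [tg, Int.cast_natCast, mul_one_div, abs_div, abs_of_pos hN0, div_le_iff₀ hN0]
  calc |((i : ℕ) : ℝ) + ε| ≤ i + |ε| := by simpa using abs_add_le ((i : ℕ) : ℝ) ε
    _ ≤ (1 + |ε|) * N := by nlinarith [abs_nonneg ε]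

lemma tg_one_div_sub_tg (N : ℕ) (ε : ℝ) (i j : ℤ) :
    tg (1 / N) ε i - tg (1 / N) 0 j = ((i - j : ℤ) + ε) / N := by
  unfold tg
  push_cast
  ring

lemma exists_sum_norm_Emat_logKer_sq_le (hA : LocallyLipschitz (uncurry A))
    (hK : LocallyLipschitz (uncurry K)) {ε : ℝ} (hε : ε ∉ range ((↑) : ℤ → ℝ)) :
    ∃ C > 0, ∀ (N : ℕ) (i : Fin N),
      ∑ j : Fin N, ‖Emat (logKer A K) (1 / N) ε (i : ℕ) (j : ℕ)‖ ^ 2 ≤ C * (1 / N) ^ 4 := by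
  obtain ⟨C, hC, hentry⟩ := exists_norm_Emat_logKer_le hA hK (1 + |ε|)
  obtain ⟨S, hS, hsum⟩ := exists_sum_inv_sin_sq_le hε
  refine ⟨C ^ 2 * S, by positivity, fun N i => ?_⟩
  have hN : (1 : ℝ) ≤ N := by exact_mod_cast i.pos
  have hterm (j : Fin N) : ‖Emat (logKer A K) (1 / N) ε (i : ℕ) (j : ℕ)‖ ^ 2 ≤
      (C * (1 / N) ^ 3) ^ 2 * (sin (π * ((((i : ℕ) - (j : ℕ) : ℤ) + ε) / N)) ^ 2)⁻¹ := by
    have hle := hentry (1 / N) ε (i : ℕ) (j : ℕ) (by positivity)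
      (div_le_one_of_le₀ hN (by positivity)) (abs_tg_one_div_le ε i)
      ((abs_tg_one_div_le 0 j).trans (by simp))
    rw [tg_one_div_sub_tg] at hle
    calc _ ≤ _ := pow_le_pow_left₀ (norm_nonneg _)
          (hle (sin_pi_mul_intCast_add_div_ne_zero hε i.pos _)) 2
      _ = _ := by rw [div_pow, sq_abs, div_eq_mul_inv]
  calc ∑ j : Fin N, ‖Emat (logKer A K) (1 / N) ε (i : ℕ) (j : ℕ)‖ ^ 2
      ≤ ∑ j : Fin N, (C * (1 / N) ^ 3) ^ 2 *
          (sin (π * ((((i : ℕ) - (j : ℕ) : ℤ) + ε) / N)) ^ 2)⁻¹ :=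
        Finset.sum_le_sum fun j _ => hterm j
    _ ≤ (C * (1 / N) ^ 3) ^ 2 * (S * N ^ 2) := by
        rw [← Finset.mul_sum]
        gcongr
        exact hsum N i.pos (i : ℕ)
    _ = C ^ 2 * S * (1 / N) ^ 4 := by field_simp

theorem stmt_5_general (hA : LocallyLipschitz (uncurry A)) (hK : LocallyLipschitz (uncurry K))
    {ε : ℝ} (hε : ε ∉ range ((↑) : ℤ → ℝ)) :
    ∃ C > (0 : ℝ), ∀ N : ℕ, 0 < N →
      specNorm (Matrix.of fun i j : Fin N =>
          Emat (logKer A K) (1 / (N : ℝ)) ε ((i : ℕ) : ℤ) ((j : ℕ) : ℤ)) ≤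
        C * (1 / (N : ℝ)) ^ ((3 : ℝ) / 2) := by
  obtain ⟨C, hC, hrow⟩ := exists_sum_norm_Emat_logKer_sq_le hA hK hε
  refine ⟨√C, by positivity, fun N hN => specNorm_le_of_sum_sq_le _ (by positivity) ?_⟩
  calc ∑ i : Fin N, ∑ j : Fin N, ‖Emat (logKer A K) (1 / N) ε (i : ℕ) (j : ℕ)‖ ^ 2
      ≤ ∑ _i : Fin N, C * (1 / N) ^ 4 := Finset.sum_le_sum fun i _ => hrow N i
    _ = C * (1 / N) ^ 3 := by
        rw [Finset.sum_const, Finset.card_fin, nsmul_eq_mul]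
        field_simp
    _ = (√C * (1 / N) ^ ((3 : ℝ) / 2)) ^ 2 := by
        rw [mul_pow, sq_sqrt hC.le, ← rpow_mul_natCast (by positivity), ← rpow_natCast]
        norm_num

end ErrorMatrix

lemma SPK.locallyLipschitz {A : ℝ → ℝ → ℂ} (hA : SPK A) : LocallyLipschitz (uncurry A) :=
  (hA.1.of_le (by exact_mod_cast le_top)).locallyLipschitz

lemma notMem_range_intCast_of_abs_lt_one {ε : ℝ} (hε : |ε| < 1) (hε0 : ε ≠ 0) :
    ε ∉ range ((↑) : ℤ → ℝ) := by
  rintro ⟨m, rfl⟩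
  exact hε0 (by exact_mod_cast Int.abs_lt_one_iff.mp (by exact_mod_cast hε))

/-- spectral-norm bound `‖E^ε‖₂ ≤ C_ε h^{3/2}` for the quadrature-error matrix. -/
theorem stmt_5
    (A2 K2 : ℝ → ℝ → ℂ) (hA2 : SPK A2) (hK2 : SPK K2)
    (ε : ℝ) (hε1 : ε ∈ Set.Icc (-(1:ℝ)/2) (1/2)) (hε0 : ε ≠ 0) :
    ∃ C > (0:ℝ), ∀ N : ℕ, 2 ≤ N →
      specNorm (Matrix.of fun i j : Fin N =>
          Emat (logKer A2 K2) (1 / (N : ℝ)) ε ((i : ℕ) : ℤ) ((j : ℕ) : ℤ)) ≤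
        C * (1 / (N : ℝ)) ^ ((3:ℝ)/2) := by
  have hε : |ε| < 1 := abs_lt.mpr ⟨by linarith [hε1.1], by linarith [hε1.2]⟩
  obtain ⟨C, hC, hbound⟩ := stmt_5_general hA2.locallyLipschitz hK2.locallyLipschitz
    (notMem_range_intCast_of_abs_lt_one hε hε0)
  exact ⟨C, hC, fun N hN => hbound N (by lia)⟩
end

section
/- For every positive integer N (h = 1/N, s_j = (j − 1/2)h) and every 1-periodic absolutely continuous function u : ℝ → ℂ with u′ ∈ L²(0,1), the midpoint Riemann sum satisfies | ∫₀¹ u(t) dt − h Σ_{j=0}^{N−1} u(s_j) | ≤ (h/2) ‖u′‖_{L²(0,1)} ≤ π h ‖u‖₁. (This expresses, by duality against H¹, the bound ‖d_h − 1‖_{−1} ≤ π h for d_h = h Σ_{j=0}^{N−1} δ_{s_j}.) -/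
/-!
Let `g = u′`. Modulo the period the nodes `s_j` are the midpoints of the cells `[kh, (k+1)h]`. On an
interval `I` the function `u` varies by at most `∫_I ‖g‖`, so replacing it by its value at one point
of `I` costs at most `|I| ∫_I ‖g‖` in the integral; using this on the two halves of each cell, with
their common endpoint as the point, and summing gives the error bound `(h/2) ∫₀¹ ‖g‖`, and
Cauchy–Schwarz gives the first inequality.

For the second, integration by parts, which for indefinite integrals is Fubini's theorem on the
triangle `x ≤ t`, and periodicity give `ĝ(m) = 2πim û(m)`, so that Parseval's identity reads
`‖g‖² = (2π)² Σ m² |û(m)|² ≤ (2π ‖u‖₁)²`.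
-/

open MeasureTheory Set

section Primitive

variable {E : Type*} [NormedAddCommGroup E] [NormedSpace ℝ E] {f f' : ℝ → E} {a b c : ℝ}

/-- `f` is an indefinite integral of `f'` on `s`. On an interval this says that `f` is absolutely
continuous with almost everywhere derivative `f'`, without mentioning pointwise derivatives. -/
def IsPrimitiveOn (f f' : ℝ → E) (s : Set ℝ) : Prop :=
  ∀ x ∈ s, ∀ y ∈ s, IntervalIntegrable f' volume x y ∧ ∫ t in x..y, f' t = f y - f x

lemma isPrimitiveOn_univ_of_eq_add_integral (hf' : LocallyIntegrable f')
    (hf : ∀ t, f t = f c + ∫ x in c..t, f' x) : IsPrimitiveOn f f' univ := by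
  have hint (x y : ℝ) : IntervalIntegrable f' volume x y :=
    (hf'.integrableOn_isCompact isCompact_uIcc).intervalIntegrable
  refine fun x _ y _ ↦ ⟨hint x y, ?_⟩
  rw [hf x, hf y, add_sub_add_left_eq_sub,
    intervalIntegral.integral_interval_sub_left (hint c y) (hint c x)]

lemma isPrimitiveOn_of_hasDerivAt [CompleteSpace E] (hf : ∀ x, HasDerivAt f (f' x) x)
    (hf' : Continuous f') (s : Set ℝ) : IsPrimitiveOn f f' s := fun x _ y _ ↦
  ⟨hf'.intervalIntegrable x y,
    intervalIntegral.integral_eq_sub_of_hasDerivAt (fun t _ ↦ hf t) (hf'.intervalIntegrable x y)⟩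

namespace IsPrimitiveOn

lemma mono {s t : Set ℝ} (hf : IsPrimitiveOn f f' t) (hst : s ⊆ t) : IsPrimitiveOn f f' s :=
  fun x hx y hy ↦ hf x (hst hx) y (hst hy)

lemma continuousOn (hf : IsPrimitiveOn f f' (uIcc a b)) : ContinuousOn f (uIcc a b) := by
  have hint := (hf a left_mem_uIcc b right_mem_uIcc).1
  refine ((continuousOn_const (c := f a)).add
    (intervalIntegral.continuousOn_primitive_interval' hint left_mem_uIcc)).congr fun t ht ↦ ?_
  rw [Pi.add_apply, (hf a left_mem_uIcc t ht).2, add_sub_cancel]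

lemma intervalIntegrable (hf : IsPrimitiveOn f f' (Icc a b)) (hab : a ≤ b) :
    IntervalIntegrable f volume a b :=
  (hf.mono (uIcc_of_le hab).subset).continuousOn.intervalIntegrable

lemma intervalIntegrable_deriv (hf : IsPrimitiveOn f f' (Icc a b)) (hab : a ≤ b) :
    IntervalIntegrable f' volume a b :=
  (hf a (left_mem_Icc.2 hab) b (right_mem_Icc.2 hab)).1

lemma norm_sub_le {x y : ℝ} (hf : IsPrimitiveOn f f' (Icc a b)) (hx : x ∈ Icc a b)
    (hy : y ∈ Icc a b) : ‖f y - f x‖ ≤ ∫ t in a..b, ‖f' t‖ := by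
  have hab : a ≤ b := hx.1.trans hx.2
  calc ‖f y - f x‖ = ‖∫ t in x..y, f' t‖ := by rw [(hf x hx y hy).2]
    _ ≤ |∫ t in x..y, ‖f' t‖| := intervalIntegral.norm_integral_le_abs_integral_norm
    _ ≤ |∫ t in a..b, ‖f' t‖| := by
      refine intervalIntegral.abs_integral_mono_interval ?_
        (.of_forall fun _ ↦ norm_nonneg _) (hf.intervalIntegrable_deriv hab).norm
      rw [uIoc_of_le hab]
      exact Ioc_subset_Ioc (le_min hx.1 hy.1) (max_le hx.2 hy.2)
    _ = ∫ t in a..b, ‖f' t‖ :=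
      abs_of_nonneg (intervalIntegral.integral_nonneg hab fun _ _ ↦ norm_nonneg _)

section Quadrature

variable [CompleteSpace E]

lemma norm_integral_sub_smul_le (hf : IsPrimitiveOn f f' (Icc a b)) (hc : c ∈ Icc a b) :
    ‖(∫ t in a..b, f t) - (b - a) • f c‖ ≤ (b - a) * ∫ t in a..b, ‖f' t‖ := by
  have hab : a ≤ b := hc.1.trans hc.2
  calc ‖(∫ t in a..b, f t) - (b - a) • f c‖ = ‖∫ t in a..b, (f t - f c)‖ := by
        rw [intervalIntegral.integral_sub (hf.intervalIntegrable hab) intervalIntegrable_const,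
          intervalIntegral.integral_const]
    _ ≤ (∫ t in a..b, ‖f' t‖) * |b - a| := by
        refine intervalIntegral.norm_integral_le_of_norm_le_const fun t ht ↦ ?_
        rw [uIoc_of_le hab] at ht
        exact hf.norm_sub_le hc (Ioc_subset_Icc_self ht)
    _ = (b - a) * ∫ t in a..b, ‖f' t‖ := by rw [abs_of_nonneg (sub_nonneg.2 hab), mul_comm]

lemma norm_integral_sub_smul_midpoint_le (hf : IsPrimitiveOn f f' (Icc a b)) (hab : a ≤ b) :
    ‖(∫ t in a..b, f t) - (b - a) • f (midpoint ℝ a b)‖ ≤ (b - a) / 2 * ∫ t in a..b, ‖f' t‖ := by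
  set c := midpoint ℝ a b
  have hac : c - a = (b - a) / 2 := by
    simp only [c, midpoint_eq_smul_add, invOf_eq_inv, smul_eq_mul]
    ring
  have hcb : b - c = (b - a) / 2 := by linarith
  have hac' : a ≤ c := by linarith
  have hcb' : c ≤ b := by linarith
  have hleft := hf.mono (Icc_subset_Icc_right hcb')
  have hright := hf.mono (Icc_subset_Icc_left hac')
  have hleft_err := hleft.norm_integral_sub_smul_le (right_mem_Icc.2 hac')
  have hright_err := hright.norm_integral_sub_smul_le (left_mem_Icc.2 hcb')
  rw [← intervalIntegral.integral_add_adjacent_intervals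
      (hleft.intervalIntegrable hac') (hright.intervalIntegrable hcb'),
    ← intervalIntegral.integral_add_adjacent_intervals
      (hleft.intervalIntegrable_deriv hac').norm (hright.intervalIntegrable_deriv hcb').norm,
    ← sub_add_sub_cancel' c a b, add_smul, add_sub_add_comm]
  refine (norm_add_le_of_le hleft_err hright_err).trans_eq ?_
  rw [hac, hcb]
  ring

lemma norm_integral_sub_smul_sum_midpoint_le {h : ℝ} {N : ℕ}
    (hf : IsPrimitiveOn f f' (Icc a b)) (hh : 0 ≤ h) (hb : a + N * h = b) :
    ‖(∫ t in a..b, f t) - h • ∑ k ∈ Finset.range N, f (a + (k + 1 / 2) * h)‖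
      ≤ h / 2 * ∫ t in a..b, ‖f' t‖ := by
  set x : ℕ → ℝ := fun k ↦ a + k * h with hx
  have hx0 : x 0 = a := by simp [hx]
  have hxmono : Monotone x := fun i j hij ↦ by simp only [hx]; gcongr
  have hlen (k : ℕ) : x (k + 1) - x k = h := by simp only [hx]; push_cast; ring
  have hmid (k : ℕ) : midpoint ℝ (x k) (x (k + 1)) = a + (k + 1 / 2) * h := by
    simp only [hx, midpoint_eq_smul_add, invOf_eq_inv, smul_eq_mul]; push_cast; ring
  have hcell {k : ℕ} (hk : k < N) : IsPrimitiveOn f f' (Icc (x k) (x (k + 1))) :=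
    hf.mono (Icc_subset_Icc (hx0.symm.trans_le (hxmono k.zero_le)) ((hxmono hk).trans_eq hb))
  have hf_int := intervalIntegral.sum_integral_adjacent_intervals (f := f) (μ := volume) (a := x)
    fun k hk ↦ (hcell hk).intervalIntegrable (hxmono k.le_succ)
  have hf'_int := intervalIntegral.sum_integral_adjacent_intervals (f := fun t ↦ ‖f' t‖)
    (μ := volume) (a := x) fun k hk ↦ ((hcell hk).intervalIntegrable_deriv (hxmono k.le_succ)).norm
  rw [hx0, show x N = b from hb] at hf_int hf'_int
  rw [← hf_int, ← hf'_int, Finset.smul_sum, ← Finset.sum_sub_distrib, Finset.mul_sum]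
  refine norm_sum_le_of_le _ fun k hk ↦ ?_
  simpa only [hlen, hmid] using
    (hcell (Finset.mem_range.1 hk)).norm_integral_sub_smul_midpoint_le (hxmono k.le_succ)

end Quadrature

end IsPrimitiveOn

end Primitive

section IntegrationByParts

variable {A : Type*} [NormedRing A] [NormedAlgebra ℝ A] {a b : ℝ}

lemma integral_integral_mul_eq_integral_mul_integral {f g : ℝ → A} (hab : a ≤ b)
    (hf : IntervalIntegrable f volume a b) (hg : IntervalIntegrable g volume a b) :
    ∫ t in a..b, (∫ x in a..t, f x) * g t = ∫ x in a..b, f x * ∫ t in x..b, g t := by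
  set μ := volume.restrict (Ioc a b)
  set F : ℝ → ℝ → A := fun x t ↦ {p : ℝ × ℝ | p.1 ≤ p.2}.indicator (fun p ↦ f p.1 * g p.2) (x, t)
  have hF : Integrable (Function.uncurry F) (μ.prod μ) :=
    (hf.1.mul_prod hg.1).indicator (measurableSet_le measurable_fst measurable_snd)
  have hFx {t : ℝ} (ht : t ∈ Ioc a b) : ∫ x, F x t ∂μ = (∫ x in a..t, f x) * g t := by
    have : (F · t) = (Iic t).indicator fun x ↦ f x * g t := by
      ext x; simp [F, indicator]
    rw [this, setIntegral_indicator measurableSet_Iic, Ioc_inter_Iic, min_eq_right ht.2,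
      integral_mul_const_of_integrable (hf.1.mono_set (Ioc_subset_Ioc_right ht.2)),
      intervalIntegral.integral_of_le ht.1.le]
  have hFt {x : ℝ} (hx : x ∈ Ioc a b) : ∫ t, F x t ∂μ = f x * ∫ t in x..b, g t := by
    have : F x = (Ici x).indicator fun t ↦ f x * g t := by
      ext t; simp [F, indicator]
    have hIcc : Ioc a b ∩ Ici x = Icc x b := by
      ext t
      exact ⟨fun h ↦ ⟨h.2, h.1.2⟩, fun h ↦ ⟨⟨hx.1.trans_le h.1, h.2⟩, h.1⟩⟩
    rw [this, setIntegral_indicator measurableSet_Ici, hIcc, integral_Icc_eq_integral_Ioc,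
      integral_const_mul_of_integrable (hg.1.mono_set (Ioc_subset_Ioc_left hx.1.le)),
      intervalIntegral.integral_of_le hx.2]
  rw [intervalIntegral.integral_of_le hab, intervalIntegral.integral_of_le hab,
    ← setIntegral_congr_fun measurableSet_Ioc fun t ht ↦ hFx ht,
    ← setIntegral_congr_fun measurableSet_Ioc fun x hx ↦ hFt hx]
  exact (integral_integral_swap hF).symm

lemma IsPrimitiveOn.integral_mul_eq_sub {f f' g g' : ℝ → A}
    (hf : IsPrimitiveOn f f' (uIcc a b)) (hg : IsPrimitiveOn g g' (uIcc a b)) :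
    ∫ t in a..b, f t * g' t = f b * g b - f a * g a - ∫ t in a..b, f' t * g t := by
  wlog hab : a ≤ b generalizing a b
  · rw [uIcc_comm] at hf hg
    rw [intervalIntegral.integral_symm b a, intervalIntegral.integral_symm b a,
      this hf hg (le_of_not_ge hab)]
    abel
  have hf' := (hf a left_mem_uIcc b right_mem_uIcc).1
  have hg' := (hg a left_mem_uIcc b right_mem_uIcc).1
  have hswap : ∫ t in a..b, (f t - f a) * g' t = ∫ t in a..b, f' t * (g b - g t) := by
    rw [intervalIntegral.integral_congr fun t ht ↦
        congrArg (· * g' t) (hf a left_mem_uIcc t ht).2.symm,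
      intervalIntegral.integral_congr fun t ht ↦
        congrArg (f' t * ·) (hg t ht b right_mem_uIcc).2.symm]
    exact integral_integral_mul_eq_integral_mul_integral hab hf' hg'
  simp only [sub_mul, mul_sub] at hswap
  rw [intervalIntegral.integral_sub (hg'.continuousOn_mul hf.continuousOn) (hg'.const_mul _),
    intervalIntegral.integral_sub (hf'.mul_const _) (hf'.mul_continuousOn hg.continuousOn),
    intervalIntegral.integral_of_le hab (f := fun t ↦ f a * g' t),
    intervalIntegral.integral_of_le hab (f := fun t ↦ f' t * g b),
    integral_const_mul_of_integrable hg'.1, integral_mul_const_of_integrable hf'.1,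
    ← intervalIntegral.integral_of_le hab, ← intervalIntegral.integral_of_le hab,
    (hf a left_mem_uIcc b right_mem_uIcc).2, (hg a left_mem_uIcc b right_mem_uIcc).2] at hswap
  rw [sub_eq_iff_eq_add.1 hswap]
  noncomm_ring

end IntegrationByParts

section Fourier

open Complex Real

lemma IsPrimitiveOn.fourierCoeffOn_deriv {a b : ℝ} {f f' : ℝ → ℂ} (hab : a < b)
    (hf : IsPrimitiveOn f f' (uIcc a b)) (n : ℤ) :
    (b - a) * fourierCoeffOn hab f' n =
      fourier (-n) (a : AddCircle (b - a)) * (f b - f a)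
        + 2 * π * I * n * fourierCoeffOn hab f n := by
  set e : ℝ → ℂ := fun t ↦ fourier (-n) (t : AddCircle (b - a))
  have hba : ((b : ℂ) - a) ≠ 0 := by exact_mod_cast (sub_pos.2 hab).ne'
  have he : IsPrimitiveOn e (fun t ↦ -2 * π * I * n / (b - a : ℝ) * e t) (uIcc a b) :=
    isPrimitiveOn_of_hasDerivAt (hasDerivAt_fourier_neg (b - a) n) (by fun_prop) _
  have he_ba : e b = e a := by
    simp only [e]; congr 1; simpa using AddCircle.coe_add_period (b - a) a
  have hparts := he.integral_mul_eq_sub hf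
  simp only [mul_assoc (_ / _ : ℂ), intervalIntegral.integral_const_mul, he_ba] at hparts
  simp only [fourierCoeffOn_eq_integral, smul_eq_mul, real_smul]
  change _ * (_ * ∫ t in a..b, e t * f' t) = e a * _ + _ * (_ * ∫ t in a..b, e t * f t)
  rw [hparts]
  push_cast
  field_simp
  ring

lemma fc_eq_fourierCoeffOn (f : ℝ → ℂ) (m : ℤ) : fc f m = fourierCoeffOn zero_lt_one f m := by
  rw [fourierCoeffOn_eq_integral, sub_zero, div_one, one_smul, fc]
  refine intervalIntegral.integral_congr fun t _ ↦ ?_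
  simp only [fourier_coe_apply, smul_eq_mul]
  rw [mul_comm]
  push_cast
  ring_nf

lemma IsPrimitiveOn.fc_deriv {f f' : ℝ → ℂ} (hf : IsPrimitiveOn f f' (Icc 0 1)) (h01 : f 0 = f 1)
    (m : ℤ) : fc f' m = 2 * π * I * m * fc f m := by
  rw [← uIcc_of_le zero_le_one] at hf
  simpa [fc_eq_fourierCoeffOn, h01] using hf.fourierCoeffOn_deriv zero_lt_one m

lemma tsum_sq_norm_fc {f : ℝ → ℂ} (hf : MemLp f 2 (volume.restrict (Ioc 0 1))) :
    ∑' m, ‖fc f m‖ ^ 2 = ∫ t in (0 : ℝ)..1, ‖f t‖ ^ 2 := by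
  simpa [fc_eq_fourierCoeffOn] using tsum_sq_fourierCoeffOn zero_lt_one hf

lemma sobNorm_one_eq_sqrt (f : ℝ → ℂ) :
    sobNorm 1 f = √(‖fc f 0‖ ^ 2 + ∑' m : ℤ, (m : ℝ) ^ 2 * ‖fc f m‖ ^ 2) := by
  rw [sobNorm]
  congr! 4 with m
  split_ifs with hm
  · simp [hm]
  · simp

lemma IsPrimitiveOn.sqrt_integral_sq_norm_deriv_le_sobNorm {f f' : ℝ → ℂ}
    (hf : IsPrimitiveOn f f' (Icc 0 1)) (h01 : f 0 = f 1)
    (hf' : MemLp f' 2 (volume.restrict (Ioc 0 1))) :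
    √(∫ t in (0 : ℝ)..1, ‖f' t‖ ^ 2) ≤ 2 * π * sobNorm 1 f := by
  have hnorm (m : ℤ) : ‖fc f' m‖ ^ 2 = (2 * π) ^ 2 * ((m : ℝ) ^ 2 * ‖fc f m‖ ^ 2) := by
    rw [hf.fc_deriv h01]
    simp only [norm_mul, Complex.norm_ofNat, norm_real, norm_I, norm_intCast, Real.norm_eq_abs,
      abs_of_pos pi_pos, mul_pow, sq_abs]
    ring
  calc √(∫ t in (0 : ℝ)..1, ‖f' t‖ ^ 2)
      = 2 * π * √(∑' m : ℤ, (m : ℝ) ^ 2 * ‖fc f m‖ ^ 2) := by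
        rw [← tsum_sq_norm_fc hf', tsum_congr hnorm, tsum_mul_left,
          Real.sqrt_mul (by positivity), Real.sqrt_sq (by positivity)]
    _ ≤ 2 * π * sobNorm 1 f := by
        rw [sobNorm_one_eq_sqrt]
        gcongr
        exact le_add_of_nonneg_left (by positivity)

end Fourier

lemma integral_norm_le_sqrt_mul_sqrt {α E : Type*} [MeasurableSpace α] [NormedAddCommGroup E]
    {μ : Measure α} [IsFiniteMeasure μ] {f : α → E} (hf : MemLp f 2 μ) :
    ∫ x, ‖f x‖ ∂μ ≤ √(μ.real univ) * √(∫ x, ‖f x‖ ^ 2 ∂μ) := by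
  have hholder := integral_mul_norm_le_Lp_mul_Lq (μ := μ) (f := fun _ ↦ (1 : ℝ))
    (g := fun x ↦ ‖f x‖) Real.HolderConjugate.two_two (memLp_const 1) (by simpa using hf.norm)
  simpa [Real.sqrt_eq_rpow] using hholder

lemma sum_range_add_succ_nsmul_eq_of_periodic {α β : Type*} [AddCommMonoid α] [AddCommMonoid β]
    {f : α → β} {h : α} {n : ℕ} (hf : Function.Periodic f (n • h)) (x : α) :
    ∑ k ∈ Finset.range n, f (x + (k + 1) • h) = ∑ k ∈ Finset.range n, f (x + k • h) := by
  cases n with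
  | zero => simp
  | succ n => rw [Finset.sum_range_succ, Finset.sum_range_succ' (fun k ↦ f (x + k • h)), hf x,
      zero_smul, add_zero]

lemma sum_range_sg_eq_sum_midpoint {f : ℝ → ℂ} {h : ℝ} {N : ℕ}
    (hf : Function.Periodic f (N * h)) :
    ∑ j ∈ Finset.range N, f (sg h 0 (j : ℤ)) = ∑ k ∈ Finset.range N, f ((k + 1 / 2) * h) := by
  rw [← nsmul_eq_mul] at hf
  convert (sum_range_add_succ_nsmul_eq_of_periodic hf (-(h / 2))).symm using 3 <;>
    (simp only [sg, nsmul_eq_mul]; push_cast; ring)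

/-- midpoint-rule bound
`|∫₀¹ u − h Σ_j u(s_j)| ≤ (h/2)‖u′‖_{L²(0,1)} ≤ π h ‖u‖₁` for a 1-periodic absolutely
continuous `u` (written as the indefinite integral of `g = u′`) with `u′ ∈ L²(0,1)`. -/
theorem stmt_7
    (N : ℕ) (hN : 0 < N) (u g : ℝ → ℂ)
    (hu : Function.Periodic u 1)
    (hgloc : MeasureTheory.LocallyIntegrable g MeasureTheory.volume)
    (hrep : ∀ t : ℝ, u t = u 0 + ∫ x in (0:ℝ)..t, g x)
    (hg2 : MeasureTheory.IntegrableOn (fun t => ‖g t‖ ^ 2) (Set.Ioc (0:ℝ) 1)) :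
    ‖(∫ t in (0:ℝ)..1, u t)
        - (1 / (N : ℂ)) * ∑ j ∈ Finset.range N, u (sg (1 / (N : ℝ)) 0 (j : ℤ))‖ ≤
      (1 / (N : ℝ)) / 2 * Real.sqrt (∫ t in (0:ℝ)..1, ‖g t‖ ^ 2) ∧
    (1 / (N : ℝ)) / 2 * Real.sqrt (∫ t in (0:ℝ)..1, ‖g t‖ ^ 2) ≤
      Real.pi * (1 / (N : ℝ)) * sobNorm 1 u := by
  have hprim : IsPrimitiveOn u g (Icc 0 1) :=
    (isPrimitiveOn_univ_of_eq_add_integral hgloc hrep).mono (subset_univ _)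
  have hgL2 : MemLp g 2 (volume.restrict (Ioc 0 1)) :=
    (memLp_two_iff_integrable_sq_norm hgloc.aestronglyMeasurable.restrict).2 hg2
  have hNh : (N : ℝ) * (1 / N) = 1 := mul_one_div_cancel (by positivity)
  have hcauchy : ∫ t in (0 : ℝ)..1, ‖g t‖ ≤ √(∫ t in (0 : ℝ)..1, ‖g t‖ ^ 2) := by
    simpa [intervalIntegral.integral_of_le] using integral_norm_le_sqrt_mul_sqrt hgL2
  have hmid : ‖(∫ t in (0 : ℝ)..1, u t)
      - 1 / (N : ℂ) * ∑ k ∈ Finset.range N, u ((k + 1 / 2) * (1 / N))‖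
        ≤ 1 / (N : ℝ) / 2 * ∫ t in (0 : ℝ)..1, ‖g t‖ := by
    simpa using hprim.norm_integral_sub_smul_sum_midpoint_le (h := 1 / N) (N := N)
      (by positivity) (by rw [hNh, zero_add])
  constructor
  · rw [sum_range_sg_eq_sum_midpoint (by rwa [hNh])]
    exact hmid.trans (by gcongr)
  · calc 1 / (N : ℝ) / 2 * √(∫ t in (0 : ℝ)..1, ‖g t‖ ^ 2)
        ≤ 1 / (N : ℝ) / 2 * (2 * Real.pi * sobNorm 1 u) := by
          gcongr
          exact hprim.sqrt_integral_sq_norm_deriv_le_sobNorm (by simpa using (hu 0).symm) hgL2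
      _ = Real.pi * (1 / (N : ℝ)) * sobNorm 1 u := by ring
end
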